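/- arXiv:1810.09344 — 3 statements merged into one kernel-verified Lean document; each statement's English description precedes it below -/
import Mathlib

section
/- Let V be a real Hilbert space, K a compact subset of V, and let (u^k)_{k≥0} be a weak greedy sequence in K with parameter γ ∈ (0,1]. If for some constants c0, C0 > 0 and s > 0 the Kolmogorov widths satisfy d_n(K) ≤ C0·e^{-c0·n^s} for all n ≥ 0, then σ_n(K) ≤ C1·γ^{-1}·e^{-c1·n^s} for all n ≥ 0, where c1 = (c0/2)·3^{-s} and C1 = C0·max{√2, e^{c1}}. -/
/-- The Kolmogorov `n`-width of a set `K` in a real inner product space: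
the infimum over all subspaces `E` of dimension at most `n` of the worst-case
distance `‖u - P_E u‖ = infDist u E` over `u ∈ K`. -/
noncomputable def kolWidth {V : Type*} [NormedAddCommGroup V] [InnerProductSpace ℝ V]
    (K : Set V) (n : ℕ) : ℝ :=
  ⨅ E : {E : Submodule ℝ V // Module.rank ℝ E ≤ (n : Cardinal)},
    ⨆ u ∈ K, Metric.infDist u (E.1 : Set V)

/-- The greedy error `σ_n(K) = sup_{x ∈ K} ‖x - P_{V_n} x‖` where
`V_n = span{u^0, …, u^{n-1}}`. -/
noncomputable def greedyErr {V : Type*} [NormedAddCommGroup V] [InnerProductSpace ℝ V]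
    (u : ℕ → V) (K : Set V) (n : ℕ) : ℝ :=
  ⨆ x ∈ K, Metric.infDist x (Submodule.span ℝ (u '' Set.Iio n) : Set V)

/-- `u` is a weak greedy sequence for `K` with parameter `γ`:
`‖u^n - P_{V_n} u^n‖ ≥ γ · σ_n(K)` for all `n`. -/
def IsWeakGreedy {V : Type*} [NormedAddCommGroup V] [InnerProductSpace ℝ V]
    (u : ℕ → V) (K : Set V) (γ : ℝ) : Prop :=
  ∀ n : ℕ, γ * greedyErr u K n ≤
    Metric.infDist (u n) (Submodule.span ℝ (u '' Set.Iio n) : Set V)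

/-!
Let `E` be a subspace of dimension `m` that is `ε`-close to `K`, and let `C ≥ ε` bound the norms in
`K`. The volume of the parallelepiped spanned by `u⁰, …, uᴺ⁻¹` is the product of the heights
`‖uⁱ - P_{Vᵢ} uⁱ‖`. Project `E` to the span of the `uⁱ`, and apply the map that multiplies by `ε`
along this projection and by `C` orthogonally to it: every `uⁱ` then has norm at most `√2 C ε`, so
Hadamard's inequality bounds the volume by `√2ᴺ Cᵐ εᴺ⁻ᵐ`. For a weak greedy sequence each of the
first `n + 1` heights is at least `γ σₙ`, because `σ` is nonincreasing, whence
`(γ σₙ)ⁿ⁺¹ ≤ √2ⁿ⁺¹ d₀ᵐ dₘⁿ⁺¹⁻ᵐ`. The rate follows by taking `m = ⌈n / 3⌉`, for which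
`m ≥ n / 3` and `n + 1 - m ≥ (n + 1) / 2`.
-/

open Module Submodule Metric Bornology InnerProductSpace

section OrthogonalScaling

variable {𝕜 F : Type*} [RCLike 𝕜] [NormedAddCommGroup F] [InnerProductSpace 𝕜 F]

/-- The linear map acting as multiplication by `a` on `W` and by `b` on `Wᗮ`. It serves to rescale
vectors lying close to `W` so that Hadamard's inequality for them becomes efficient. -/
noncomputable def orthogonalScaling (W : Submodule 𝕜 F) [W.HasOrthogonalProjection] (a b : 𝕜) :
    F →ₗ[𝕜] F :=
  a • W.starProjection.toLinearMap + b • Wᗮ.starProjection.toLinearMap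

theorem orthogonalScaling_apply (W : Submodule 𝕜 F) [W.HasOrthogonalProjection] (a b : 𝕜) (x : F) :
    orthogonalScaling W a b x = a • W.starProjection x + b • Wᗮ.starProjection x := rfl

theorem norm_orthogonalScaling_sq (W : Submodule 𝕜 F) [W.HasOrthogonalProjection] (a b : 𝕜)
    (x : F) :
    ‖orthogonalScaling W a b x‖ ^ 2 =
      (‖a‖ * ‖W.starProjection x‖) ^ 2 + (‖b‖ * ‖Wᗮ.starProjection x‖) ^ 2 := by
  have horth : ⟪a • W.starProjection x, b • Wᗮ.starProjection x⟫_𝕜 = 0 :=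
    W.inner_right_of_mem_orthogonal (W.smul_mem a (W.starProjection_apply_mem x))
      (Wᗮ.smul_mem b (Wᗮ.starProjection_apply_mem x))
  rw [orthogonalScaling_apply, sq, norm_add_sq_eq_norm_sq_add_norm_sq_of_inner_eq_zero _ _ horth]
  simp only [norm_smul, sq]

theorem det_orthogonalScaling [FiniteDimensional 𝕜 F] (W : Submodule 𝕜 F) (a b : 𝕜) :
    LinearMap.det (orthogonalScaling W a b) =
      a ^ finrank 𝕜 W * b ^ (finrank 𝕜 F - finrank 𝕜 W) := by
  have apply_of_mem {x : F} (hx : x ∈ W) : orthogonalScaling W a b x = a • x := by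
    rw [orthogonalScaling_apply, starProjection_eq_self_iff.2 hx,
      (starProjection_apply_eq_zero_iff Wᗮ).2 (W.le_orthogonal_orthogonal hx), smul_zero, add_zero]
  have hW : W ≤ W.comap (orthogonalScaling W a b) := fun x hx => by
    rw [mem_comap, apply_of_mem hx]
    exact W.smul_mem a hx
  have restrict_eq : (orthogonalScaling W a b).restrict hW = a • LinearMap.id :=
    LinearMap.ext fun x => Subtype.ext (apply_of_mem x.2)
  have mapQ_eq : W.mapQ W (orthogonalScaling W a b) hW = b • LinearMap.id := by
    refine linearMap_qext _ (LinearMap.ext fun x => ?_)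
    refine (Submodule.Quotient.eq W).2 ?_
    have hdiff : orthogonalScaling W a b x - b • x = (a - b) • W.starProjection x := by
      rw [orthogonalScaling_apply, starProjection_orthogonal_val]
      module
    exact hdiff ▸ W.smul_mem _ (W.starProjection_apply_mem x)
  rw [LinearMap.det_eq_det_mul_det W _ hW, restrict_eq, mapQ_eq, LinearMap.det_smul,
    LinearMap.det_smul, LinearMap.det_id, LinearMap.det_id, mul_one, mul_one, finrank_quotient]

end OrthogonalScaling

theorem norm_starProjection_orthogonal_eq_infDist {𝕜 F : Type*} [RCLike 𝕜] [NormedAddCommGroup F]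
    [InnerProductSpace 𝕜 F] (W : Submodule 𝕜 F) [W.HasOrthogonalProjection] (x : F) :
    ‖Wᗮ.starProjection x‖ = infDist x (W : Set F) := by
  rw [starProjection_orthogonal_val, starProjection_minimal, infDist_eq_iInf]
  simp only [dist_eq_norm]
  rfl

theorem infDist_map_orthogonalProjectionOnto_le {𝕜 V : Type*} [RCLike 𝕜] [NormedAddCommGroup V]
    [InnerProductSpace 𝕜 V] (F E : Submodule 𝕜 V) [F.HasOrthogonalProjection] (x : F) :
    infDist x (E.map F.orthogonalProjectionOnto.toLinearMap : Set F) ≤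
      infDist (x : V) (E : Set V) := by
  refine (le_infDist E.nonempty).2 fun e he => ?_
  calc infDist x (E.map F.orthogonalProjectionOnto.toLinearMap : Set F)
      ≤ dist x (F.orthogonalProjectionOnto e) := infDist_le_dist_of_mem (mem_map_of_mem he)
    _ = ‖F.orthogonalProjectionOnto (x - e)‖ := by
        rw [map_sub, orthogonalProjectionOnto_mem_subspace_eq_self, dist_eq_norm]
    _ ≤ dist (x : V) e := dist_eq_norm (x : V) e ▸ F.norm_orthogonalProjectionOnto_apply_le _

theorem infDist_coe_span_image {𝕜 V ι : Type*} [NormedField 𝕜] [NormedAddCommGroup V]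
    [NormedSpace 𝕜 V] (F : Submodule 𝕜 V) (v : ι → F) (s : Set ι) (x : F) :
    infDist (x : V) (span 𝕜 ((fun i => (v i : V)) '' s) : Set V) =
      infDist x (span 𝕜 (v '' s) : Set F) := by
  have hspan : span 𝕜 ((fun i => (v i : V)) '' s) = (span 𝕜 (v '' s)).map F.subtype := by
    rw [map_span, Set.image_image]
    rfl
  rw [hspan, ← infDist_image F.subtypeₗᵢ.isometry]
  rfl

section VolumeBound

variable {F : Type*} [NormedAddCommGroup F] [InnerProductSpace ℝ F] {N : ℕ}

theorem abs_det_orthonormalBasis_le_prod_norm (b : OrthonormalBasis (Fin N) ℝ F) (v : Fin N → F) :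
    |b.toBasis.det v| ≤ ∏ i, ‖v i‖ := by
  have : Fact (finrank ℝ F = N) := ⟨by simpa using finrank_eq_card_basis b.toBasis⟩
  exact b.toBasis.orientation.volumeForm_robust' b v ▸
    b.toBasis.orientation.abs_volumeForm_apply_le v

theorem norm_orthogonalScaling_le (W : Submodule ℝ F) [W.HasOrthogonalProjection] {C ε : ℝ}
    (hε : 0 ≤ ε) {x : F} (hx : ‖x‖ ≤ C) (hxW : infDist x (W : Set F) ≤ ε) :
    ‖orthogonalScaling W ε C x‖ ≤ √2 * (C * ε) := by
  have hC : 0 ≤ C := (norm_nonneg x).trans hx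
  have hproj : ‖W.starProjection x‖ ≤ C := (W.norm_starProjection_apply_le x).trans hx
  refine le_of_sq_le_sq ?_ (by positivity)
  calc ‖orthogonalScaling W ε C x‖ ^ 2
      = (ε * ‖W.starProjection x‖) ^ 2 + (C * infDist x (W : Set F)) ^ 2 := by
        rw [norm_orthogonalScaling_sq, norm_starProjection_orthogonal_eq_infDist,
          Real.norm_of_nonneg hε, Real.norm_of_nonneg hC]
    _ ≤ (ε * C) ^ 2 + (C * ε) ^ 2 := by
        have := infDist_nonneg (x := x) (s := (W : Set F))
        gcongr
    _ = (√2 * (C * ε)) ^ 2 := by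
        rw [mul_pow √2, Real.sq_sqrt zero_le_two]
        ring

theorem abs_det_le_of_infDist_le (b : OrthonormalBasis (Fin N) ℝ F) (W : Submodule ℝ F)
    {v : Fin N → F} {C ε : ℝ} (hC : 0 < C) (hε : 0 < ε) (hv : ∀ i, ‖v i‖ ≤ C)
    (hvW : ∀ i, infDist (v i) (W : Set F) ≤ ε) :
    |b.toBasis.det v| ≤ √2 ^ N * (C ^ finrank ℝ W * ε ^ (N - finrank ℝ W)) := by
  have : FiniteDimensional ℝ F := b.toBasis.finiteDimensional_of_finite
  have hF : finrank ℝ F = N := by simpa using finrank_eq_card_basis b.toBasis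
  obtain ⟨l, hl⟩ := Nat.exists_eq_add_of_le (hF ▸ W.finrank_le)
  set k := finrank ℝ W
  have hdet : LinearMap.det (orthogonalScaling W ε C) = ε ^ k * C ^ l := by
    rw [det_orthogonalScaling, hF, hl, Nat.add_sub_cancel_left]
  have hscaled : ε ^ k * C ^ l * |b.toBasis.det v| ≤ (√2 * (C * ε)) ^ N :=
    calc ε ^ k * C ^ l * |b.toBasis.det v|
        = |b.toBasis.det (orthogonalScaling W ε C ∘ v)| := by
          rw [Basis.det_comp, hdet, abs_mul, abs_of_pos (by positivity : 0 < ε ^ k * C ^ l)]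
      _ ≤ ∏ i, ‖orthogonalScaling W ε C (v i)‖ := abs_det_orthonormalBasis_le_prod_norm b _
      _ ≤ ∏ _i : Fin N, √2 * (C * ε) := Finset.prod_le_prod (fun _ _ => norm_nonneg _)
          fun i _ => norm_orthogonalScaling_le W hε.le (hv i) (hvW i)
      _ = (√2 * (C * ε)) ^ N := Fin.prod_const N _
  refine le_of_mul_le_mul_left (hscaled.trans_eq ?_) (by positivity : 0 < ε ^ k * C ^ l)
  rw [hl, Nat.add_sub_cancel_left]
  ring

end VolumeBound

section GramSchmidt

variable {𝕜 V ι : Type*} [RCLike 𝕜] [NormedAddCommGroup V] [InnerProductSpace 𝕜 V]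
  [LinearOrder ι] [LocallyFiniteOrderBot ι] [WellFoundedLT ι]

theorem infDist_span_Iio_le_norm_gramSchmidt (v : ι → V) (i : ι) :
    infDist (v i) (span 𝕜 (v '' Set.Iio i) : Set V) ≤ ‖gramSchmidt 𝕜 v i‖ := by
  have hmem : v i - gramSchmidt 𝕜 v i ∈ span 𝕜 (v '' Set.Iio i) := by
    rw [← span_gramSchmidt_Iio, gramSchmidt_def, sub_sub_cancel]
    refine sum_mem fun j hj => span_mono ?_ (starProjection_apply_mem _ (v i))
    exact Set.singleton_subset_iff.2 (Set.mem_image_of_mem _ (Finset.mem_Iio.1 hj))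
  simpa only [dist_eq_norm, sub_sub_cancel] using
    infDist_le_dist_of_mem (x := v i) (SetLike.mem_coe.2 hmem)

theorem inner_gramSchmidt_self (v : ι → V) (i : ι) :
    ⟪gramSchmidt 𝕜 v i, v i⟫_𝕜 = (‖gramSchmidt 𝕜 v i‖ : 𝕜) ^ 2 := by
  rw [gramSchmidt_def'' 𝕜 v i, inner_add_right, inner_self_eq_norm_sq_to_K, inner_sum,
    Finset.sum_eq_zero fun j hj => ?_, add_zero]
  rw [inner_smul_right, gramSchmidt_orthogonal 𝕜 v (Finset.mem_Iio.1 hj).ne', mul_zero]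

theorem norm_gramSchmidt_eq_norm_inner_gramSchmidtOrthonormalBasis [Fintype ι]
    [FiniteDimensional 𝕜 V] (h : finrank 𝕜 V = Fintype.card ι) (v : ι → V) (i : ι) :
    ‖gramSchmidt 𝕜 v i‖ = ‖⟪gramSchmidtOrthonormalBasis h v i, v i⟫_𝕜‖ := by
  by_cases hi : gramSchmidtNormed 𝕜 v i = 0
  · rw [inner_gramSchmidtOrthonormalBasis_eq_zero h hi]
    simpa [gramSchmidtNormed] using hi
  · rw [gramSchmidtOrthonormalBasis_apply h hi, gramSchmidtNormed, inner_smul_left,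
      inner_gramSchmidt_self]
    have hgs : ‖gramSchmidt 𝕜 v i‖ ≠ 0 := by simpa [gramSchmidtNormed] using hi
    simp [sq, hgs]

theorem prod_infDist_span_Iio_le_norm_det [Fintype ι] [DecidableEq ι] [FiniteDimensional 𝕜 V]
    (h : finrank 𝕜 V = Fintype.card ι) (v : ι → V) :
    ∏ i, infDist (v i) (span 𝕜 (v '' Set.Iio i) : Set V) ≤
      ‖(gramSchmidtOrthonormalBasis h v).toBasis.det v‖ := by
  rw [gramSchmidtOrthonormalBasis_det, norm_prod]
  exact Finset.prod_le_prod (fun _ _ => infDist_nonneg) fun i _ =>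
    (infDist_span_Iio_le_norm_gramSchmidt (𝕜 := 𝕜) v i).trans_eq
      (norm_gramSchmidt_eq_norm_inner_gramSchmidtOrthonormalBasis h v i)

theorem finrank_span_range_eq_card_of_gramSchmidt_ne_zero [Fintype ι] {v : ι → V}
    (hv : ∀ i, gramSchmidt 𝕜 v i ≠ 0) : finrank 𝕜 (span 𝕜 (Set.range v)) = Fintype.card ι :=
  span_gramSchmidt 𝕜 v ▸ finrank_span_eq_card
    (linearIndependent_of_ne_zero_of_inner_eq_zero hv (gramSchmidt_pairwise_orthogonal 𝕜 v))

end GramSchmidt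

section Heights

variable {V : Type*} [NormedAddCommGroup V] [InnerProductSpace ℝ V] {N m : ℕ}

theorem prod_infDist_span_Iio_le_of_finrank_eq [FiniteDimensional ℝ V]
    (hV : finrank ℝ V = N) (W : Submodule ℝ V) (hW : finrank ℝ W ≤ m) (hmN : m ≤ N)
    {v : Fin N → V} {C ε : ℝ} (hε : 0 < ε) (hεC : ε ≤ C) (hv : ∀ i, ‖v i‖ ≤ C)
    (hvW : ∀ i, infDist (v i) (W : Set V) ≤ ε) :
    ∏ i, infDist (v i) (span ℝ (v '' Set.Iio i) : Set V) ≤ √2 ^ N * (C ^ m * ε ^ (N - m)) := by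
  have hC : 0 < C := hε.trans_le hεC
  obtain ⟨d, rfl⟩ := Nat.exists_eq_add_of_le hW
  have hsplit : N - finrank ℝ W = d + (N - (finrank ℝ W + d)) := by omega
  refine (prod_infDist_span_Iio_le_norm_det (by simpa using hV) v).trans
    ((abs_det_le_of_infDist_le _ W hC hε hv hvW).trans ?_)
  rw [hsplit, pow_add, pow_add, mul_assoc (C ^ _)]
  gcongr

theorem prod_infDist_span_Iio_le (E : Submodule ℝ V) (hE : Module.rank ℝ E ≤ m) (hmN : m ≤ N)
    {v : Fin N → V} {C ε : ℝ} (hε : 0 < ε) (hεC : ε ≤ C) (hv : ∀ i, ‖v i‖ ≤ C)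
    (hvE : ∀ i, infDist (v i) (E : Set V) ≤ ε) :
    ∏ i, infDist (v i) (span ℝ (v '' Set.Iio i) : Set V) ≤ √2 ^ N * (C ^ m * ε ^ (N - m)) := by
  have hC : 0 < C := hε.trans_le hεC
  by_cases hdep : ∃ i, gramSchmidt ℝ v i = 0
  · obtain ⟨i, hi⟩ := hdep
    have hzero : infDist (v i) (span ℝ (v '' Set.Iio i) : Set V) = 0 :=
      ((infDist_span_Iio_le_norm_gramSchmidt v i).trans_eq (by rw [hi, norm_zero])).antisymm
        infDist_nonneg
    rw [Finset.prod_eq_zero (Finset.mem_univ i) hzero]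
    positivity
  push Not at hdep
  set F := span ℝ (Set.range v)
  have : FiniteDimensional ℝ F := .span_of_finite ℝ (Set.finite_range v)
  have hF : finrank ℝ F = N := by
    simpa using finrank_span_range_eq_card_of_gramSchmidt_ne_zero hdep
  let w : Fin N → F := fun i => ⟨v i, subset_span (Set.mem_range_self i)⟩
  have hmap : finrank ℝ (E.map F.orthogonalProjectionOnto.toLinearMap) ≤ m :=
    finrank_le_of_rank_le ((rank_map_le _ E).trans hE)
  have hw := prod_infDist_span_Iio_le_of_finrank_eq hF _ hmap hmN (v := w) hε hεC hv
    fun i => (infDist_map_orthogonalProjectionOnto_le F E (w i)).trans (hvE i)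
  simpa only [← infDist_coe_span_image] using hw

end Heights

section SupInfDist

variable {X : Type*} [PseudoMetricSpace X] {K s : Set X}

theorem iSup_infDist_nonneg (K s : Set X) : 0 ≤ ⨆ y ∈ K, infDist y s :=
  Real.iSup_nonneg fun _ => Real.iSup_nonneg fun _ => infDist_nonneg

theorem infDist_le_iSup_infDist (hK : IsBounded K) (hs : s.Nonempty) {x : X} (hx : x ∈ K) :
    infDist x s ≤ ⨆ y ∈ K, infDist y s := by
  obtain ⟨z, hz⟩ := hs
  obtain ⟨R, hR⟩ := hK.subset_closedBall z
  have hbdd : BddAbove (Set.range fun y => ⨆ _ : y ∈ K, infDist y s) :=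
    ⟨R, Set.forall_mem_range.2 fun y =>
      Real.iSup_le (fun hy => (infDist_le_dist_of_mem hz).trans (hR hy))
        (dist_nonneg.trans (hR hx))⟩
  exact (ciSup_pos (f := fun _ => infDist x s) hx).ge.trans (le_ciSup hbdd x)

end SupInfDist

section Widths

variable {V : Type*} [NormedAddCommGroup V] [InnerProductSpace ℝ V] {K : Set V}

theorem kolWidth_nonneg (K : Set V) (n : ℕ) : 0 ≤ kolWidth K n :=
  Real.iInf_nonneg fun _ => iSup_infDist_nonneg K _

theorem nonempty_submodule_rank_le (V : Type*) [AddCommGroup V] [Module ℝ V] (n : ℕ) :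
    Nonempty {E : Submodule ℝ V // Module.rank ℝ E ≤ (n : Cardinal)} :=
  ⟨⊥, by simp⟩

theorem kolWidth_antitone (K : Set V) : Antitone (kolWidth K) := by
  intro m n hmn
  have := nonempty_submodule_rank_le V m
  refine le_ciInf fun E => ?_
  have hE : Module.rank ℝ E.1 ≤ (n : Cardinal) := E.2.trans (by exact_mod_cast hmn)
  exact ciInf_le ⟨0, Set.forall_mem_range.2 fun _ => iSup_infDist_nonneg K _⟩
    (⟨E.1, hE⟩ : {E : Submodule ℝ V // Module.rank ℝ E ≤ (n : Cardinal)})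

theorem exists_submodule_infDist_lt_of_kolWidth_lt (hK : IsBounded K) {n : ℕ} {ε : ℝ}
    (h : kolWidth K n < ε) :
    ∃ E : Submodule ℝ V, Module.rank ℝ E ≤ (n : Cardinal) ∧ ∀ x ∈ K, infDist x (E : Set V) < ε := by
  have := nonempty_submodule_rank_le V n
  obtain ⟨E, hE⟩ := exists_lt_of_ciInf_lt h
  exact ⟨E.1, E.2, fun x hx => (infDist_le_iSup_infDist hK E.1.nonempty hx).trans_lt hE⟩

theorem norm_le_kolWidth_zero (hK : IsBounded K) {x : V} (hx : x ∈ K) : ‖x‖ ≤ kolWidth K 0 := by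
  refine le_of_forall_gt_imp_ge_of_dense fun ε hε => ?_
  obtain ⟨E, hE, hEx⟩ := exists_submodule_infDist_lt_of_kolWidth_lt hK hε
  obtain rfl : E = ⊥ := rank_eq_zero.1 (by simpa using hE)
  simpa using (hEx x hx).le

theorem greedyErr_antitone (hK : IsBounded K) (u : ℕ → V) : Antitone (greedyErr u K) := by
  intro m n hmn
  have hm : 0 ≤ greedyErr u K m := iSup_infDist_nonneg K _
  refine Real.iSup_le (fun x => Real.iSup_le (fun hx => ?_) hm) hm
  have hspan : span ℝ (u '' Set.Iio m) ≤ span ℝ (u '' Set.Iio n) :=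
    span_mono (Set.image_mono (Set.Iio_subset_Iio hmn))
  exact (infDist_le_infDist_of_subset hspan (span ℝ (u '' Set.Iio m)).nonempty).trans
    (infDist_le_iSup_infDist hK (span ℝ _).nonempty hx)

-- The widths need not be attained, so the bound is proved for `d + δ` and `δ` is sent to `0`.
theorem prod_infDist_span_Iio_le_kolWidth (hK : IsBounded K) {N m : ℕ} (hmN : m ≤ N)
    {v : Fin N → V} (hv : ∀ i, v i ∈ K) :
    ∏ i, infDist (v i) (span ℝ (v '' Set.Iio i) : Set V) ≤
      √2 ^ N * (kolWidth K 0 ^ m * kolWidth K m ^ (N - m)) := by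
  have hperturbed : ∀ δ > 0, ∏ i, infDist (v i) (span ℝ (v '' Set.Iio i) : Set V) ≤
      √2 ^ N * ((kolWidth K 0 + δ) ^ m * (kolWidth K m + δ) ^ (N - m)) := fun δ hδ => by
    obtain ⟨E, hE, hKE⟩ :=
      exists_submodule_infDist_lt_of_kolWidth_lt hK (lt_add_of_pos_right (kolWidth K m) hδ)
    refine prod_infDist_span_Iio_le E hE hmN (add_pos_of_nonneg_of_pos (kolWidth_nonneg K m) hδ)
      (by gcongr; exact kolWidth_antitone K m.zero_le) (fun i => ?_) fun i => (hKE _ (hv i)).le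
    exact (norm_le_kolWidth_zero hK (hv i)).trans (le_add_of_nonneg_right hδ.le)
  have hcont : Continuous fun δ : ℝ =>
      √2 ^ N * ((kolWidth K 0 + δ) ^ m * (kolWidth K m + δ) ^ (N - m)) := by fun_prop
  have hlim := hcont.continuousWithinAt (s := Set.Ioi 0) (x := 0) |>.tendsto
  simp only [add_zero] at hlim
  exact ge_of_tendsto hlim (Filter.eventually_of_mem self_mem_nhdsWithin hperturbed)

theorem IsWeakGreedy.mul_greedyErr_pow_le (hK : IsBounded K) {u : ℕ → V} (hu : ∀ n, u n ∈ K)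
    {γ : ℝ} (hγ : 0 ≤ γ) (hwg : IsWeakGreedy u K γ) {n m : ℕ} (hm : m ≤ n + 1) :
    (γ * greedyErr u K n) ^ (n + 1) ≤
      √2 ^ (n + 1) * (kolWidth K 0 ^ m * kolWidth K m ^ (n + 1 - m)) := by
  have himage (i : Fin (n + 1)) :
      (fun j : Fin (n + 1) => u j) '' Set.Iio i = u '' Set.Iio (i : ℕ) := by
    rw [← Fin.image_val_Iio, Set.image_image]
  calc (γ * greedyErr u K n) ^ (n + 1)
      = ∏ _i : Fin (n + 1), γ * greedyErr u K n := (Fin.prod_const _ _).symm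
    _ ≤ ∏ i : Fin (n + 1), infDist (u i) (span ℝ (u '' Set.Iio (i : ℕ)) : Set V) :=
        Finset.prod_le_prod (fun _ _ => mul_nonneg hγ (iSup_infDist_nonneg K _)) fun i _ =>
          (mul_le_mul_of_nonneg_left (greedyErr_antitone hK u i.is_le) hγ).trans (hwg i)
    _ ≤ √2 ^ (n + 1) * (kolWidth K 0 ^ m * kolWidth K m ^ (n + 1 - m)) := by
        simpa only [himage] using
          prod_infDist_span_Iio_le_kolWidth hK hm (v := fun i : Fin (n + 1) => u i) fun i => hu i

end Widths

theorem succ_mul_rpow_le_sub_mul_rpow {c s : ℝ} (hc : 0 ≤ c) (hs : 0 ≤ s) {n m : ℕ}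
    (hnm : n ≤ 3 * m) (hmn : 2 * m ≤ n + 1) :
    ((n + 1 : ℕ) : ℝ) * (c / 2 * (3 : ℝ) ^ (-s) * (n : ℝ) ^ s) ≤
      ((n + 1 - m : ℕ) : ℝ) * (c * (m : ℝ) ^ s) := by
  have hthird : (3 : ℝ) ^ (-s) * (n : ℝ) ^ s ≤ (m : ℝ) ^ s := by
    rw [Real.rpow_neg zero_le_three, ← Real.inv_rpow zero_le_three,
      ← Real.mul_rpow (by positivity) n.cast_nonneg]
    have : (n : ℝ) ≤ 3 * m := by exact_mod_cast hnm
    exact Real.rpow_le_rpow (by positivity) (by linarith) hs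
  have hhalf : ((n + 1 : ℕ) : ℝ) ≤ 2 * ((n + 1 - m : ℕ) : ℝ) := by
    exact_mod_cast (by omega : n + 1 ≤ 2 * (n + 1 - m))
  calc ((n + 1 : ℕ) : ℝ) * (c / 2 * (3 : ℝ) ^ (-s) * (n : ℝ) ^ s)
      = ((n + 1 : ℕ) : ℝ) * (c / 2 * ((3 : ℝ) ^ (-s) * (n : ℝ) ^ s)) := by ring
    _ ≤ 2 * ((n + 1 - m : ℕ) : ℝ) * (c / 2 * (m : ℝ) ^ s) := by gcongr
    _ = ((n + 1 - m : ℕ) : ℝ) * (c * (m : ℝ) ^ s) := by ring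

theorem statement1_general {V : Type*} [NormedAddCommGroup V] [InnerProductSpace ℝ V]
    (K : Set V) (hK : IsBounded K) (u : ℕ → V) (hu : ∀ n, u n ∈ K)
    (γ : ℝ) (hγ : 0 < γ) (hwg : IsWeakGreedy u K γ)
    (c0 C0 s : ℝ) (hc0 : 0 ≤ c0) (hs : 0 < s)
    (hd : ∀ n : ℕ, kolWidth K n ≤ C0 * Real.exp (-(c0 * (n : ℝ) ^ s))) (n : ℕ) :
    greedyErr u K n ≤
      C0 * √2 * γ⁻¹ * Real.exp (-(c0 / 2 * (3 : ℝ) ^ (-s) * (n : ℝ) ^ s)) := by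
  have hd0 : kolWidth K 0 ≤ C0 := by simpa [Real.zero_rpow hs.ne'] using hd 0
  have hC0 : 0 ≤ C0 := (kolWidth_nonneg K 0).trans hd0
  set c1 := c0 / 2 * (3 : ℝ) ^ (-s)
  obtain ⟨m, hnm, hmn⟩ : ∃ m, n ≤ 3 * m ∧ 2 * m ≤ n + 1 := ⟨(n + 2) / 3, by omega, by omega⟩
  have hexp : Real.exp (-(c0 * (m : ℝ) ^ s)) ^ (n + 1 - m) ≤
      Real.exp (-(c1 * (n : ℝ) ^ s)) ^ (n + 1) := by
    rw [← Real.exp_nat_mul, ← Real.exp_nat_mul, mul_neg, mul_neg]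
    exact Real.exp_le_exp.2 (neg_le_neg (succ_mul_rpow_le_sub_mul_rpow hc0 hs.le hnm hmn))
  have hpow : (γ * greedyErr u K n) ^ (n + 1) ≤
      (C0 * √2 * Real.exp (-(c1 * (n : ℝ) ^ s))) ^ (n + 1) :=
    calc (γ * greedyErr u K n) ^ (n + 1)
        ≤ √2 ^ (n + 1) * (kolWidth K 0 ^ m * kolWidth K m ^ (n + 1 - m)) :=
          hwg.mul_greedyErr_pow_le hK hu hγ.le (by omega)
      _ ≤ √2 ^ (n + 1) * (C0 ^ m * (C0 * Real.exp (-(c0 * (m : ℝ) ^ s))) ^ (n + 1 - m)) := by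
          have := kolWidth_nonneg K 0
          have := kolWidth_nonneg K m
          gcongr
          exact hd m
      _ = √2 ^ (n + 1) * C0 ^ (n + 1) * Real.exp (-(c0 * (m : ℝ) ^ s)) ^ (n + 1 - m) := by
          rw [mul_pow C0, ← mul_assoc (C0 ^ m), pow_mul_pow_sub C0 (by omega), mul_assoc]
      _ ≤ √2 ^ (n + 1) * C0 ^ (n + 1) * Real.exp (-(c1 * (n : ℝ) ^ s)) ^ (n + 1) := by gcongr
      _ = (C0 * √2 * Real.exp (-(c1 * (n : ℝ) ^ s))) ^ (n + 1) := by ring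
  have hroot := le_of_pow_le_pow_left₀ n.succ_ne_zero (by positivity) hpow
  calc greedyErr u K n = γ⁻¹ * (γ * greedyErr u K n) := (inv_mul_cancel_left₀ hγ.ne' _).symm
    _ ≤ γ⁻¹ * (C0 * √2 * Real.exp (-(c1 * (n : ℝ) ^ s))) := by gcongr
    _ = C0 * √2 * γ⁻¹ * Real.exp (-(c1 * (n : ℝ) ^ s)) := by ring

theorem statement1 {V : Type*} [NormedAddCommGroup V] [InnerProductSpace ℝ V] [CompleteSpace V]
    (K : Set V) (hK : IsCompact K) (u : ℕ → V) (hu : ∀ n, u n ∈ K)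
    (γ : ℝ) (hγ : γ ∈ Set.Ioc (0 : ℝ) 1) (hwg : IsWeakGreedy u K γ)
    (c0 C0 s : ℝ) (hc0 : 0 < c0) (hC0 : 0 < C0) (hs : 0 < s)
    (hd : ∀ n : ℕ, kolWidth K n ≤ C0 * Real.exp (-(c0 * (n : ℝ) ^ s))) :
    ∀ n : ℕ, greedyErr u K n ≤
      C0 * max (Real.sqrt 2) (Real.exp (c0 / 2 * (3 : ℝ) ^ (-s))) * γ⁻¹ *
        Real.exp (-(c0 / 2 * (3 : ℝ) ^ (-s) * (n : ℝ) ^ s)) := by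
  have := inv_nonneg.2 hγ.1.le
  exact fun n => (statement1_general K hK.isBounded u hu γ hγ.1 hwg c0 C0 s hc0.le hs hd n).trans
    (by gcongr; exact le_max_left _ _)
end

section
/- For every s > 0 and γ ∈ (0,1] there exists a constant C > 0 depending only on s and γ with the following property: for every real Hilbert space V, every compact subset K of V, every n* ≥ 0, every C0 > 0, and every weak greedy sequence (u^k)_{k≥0} in K with parameter γ, if d_n(K) ≤ C0·(max{1,n})^{-s} holds for all 0 ≤ n ≤ n*, then σ_n(K) ≤ C·C0·(max{1,n})^{-s} holds for all 0 ≤ n ≤ n*; in particular C is independent of n*. -/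
universe u

/-!
Let `v₀, v₁, …` be the Gram–Schmidt orthonormalisation of `u⁰, u¹, …`. The matrix of inner
products `⟪vᵢ, uʲ⟫` with `N ≤ i, j < N + 2 * m` is triangular with diagonal entries at least
`γ * σ_i`, so its squared determinant is at least `(γ * σ_{N+2m}) ^ (4 * m)`. It does not
change when the `vᵢ` are replaced by another orthonormal basis of their span. For a
subspace `E` of dimension at most `m`, choose a basis with `m` of its vectors orthogonal to `E`:
Hadamard's inequality for the rows and the arithmetic-geometric mean inequality then bound the
squared determinant by `(2 * σ_N ^ 2) ^ m * (2 * ε ^ 2) ^ m`, where `ε` is the worst distance from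
`K` to `E`, as `m` rows are controlled by distances to `E` and the others by distances to `V_N`.
Hence `(γ * σ_{N+2m}) ^ 2 ≤ 2 * σ_N * d_m`, and with `N = ⌊n/2⌋` and `m = ⌊n/4⌋` a polynomial rate
of `d` passes to `σ` by strong induction on `n`.
-/

open Module InnerProductSpace

section LinearAlgebra

variable {𝕜 ι : Type*} [RCLike 𝕜] [Fintype ι]

theorem prod_le_sum_div_card_pow {α : Type*} (s : Finset α) {z : α → ℝ} (hz : ∀ i ∈ s, 0 ≤ z i) :
    ∏ i ∈ s, z i ≤ ((∑ i ∈ s, z i) / s.card) ^ s.card := by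
  rcases s.eq_empty_or_nonempty with rfl | hs
  · simp
  have hcard : (0 : ℝ) < s.card := by exact_mod_cast hs.card_pos
  have amgm : (∏ i ∈ s, z i) ^ (s.card : ℝ)⁻¹ ≤ (∑ i ∈ s, z i) / s.card := by
    simpa using Real.geom_mean_le_arith_mean s (fun _ ↦ 1) z (by simp) (by simpa using hcard) hz
  calc ∏ i ∈ s, z i = ((∏ i ∈ s, z i) ^ (s.card : ℝ)⁻¹) ^ s.card :=
        (Real.rpow_inv_natCast_pow (Finset.prod_nonneg hz) hs.card_pos.ne').symm
    _ ≤ _ := pow_le_pow_left₀ (Real.rpow_nonneg (Finset.prod_nonneg hz) _) amgm _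

theorem exists_orthonormalBasis_mem_of_card_le_finrank {F : Type*} [NormedAddCommGroup F]
    [InnerProductSpace 𝕜 F] [FiniteDimensional 𝕜 F] (hF : finrank 𝕜 F = Fintype.card ι)
    (W : Submodule 𝕜 F) {s : Finset ι} (hs : s.card ≤ finrank 𝕜 W) :
    ∃ b : OrthonormalBasis ι 𝕜 F, ∀ i ∈ s, b i ∈ W := by
  classical
  obtain ⟨f⟩ : Nonempty (s ↪ Fin (finrank 𝕜 W)) :=
    Function.Embedding.nonempty_of_card_le (by simpa using hs)
  let w : s → F := fun i ↦ stdOrthonormalBasis 𝕜 W (f i)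
  have hw : Orthonormal 𝕜 w :=
    ((stdOrthonormalBasis 𝕜 W).orthonormal.comp f f.injective).comp_linearIsometry W.subtypeₗᵢ
  let v : ι → F := fun i ↦ if h : i ∈ s then w ⟨i, h⟩ else 0
  have hv : ∀ i : s, v i = w i := fun i ↦ dif_pos i.2
  have hvs : Orthonormal 𝕜 ((s : Set ι).domRestrict v) := by
    rwa [show (s : Set ι).domRestrict v = w from funext hv]
  obtain ⟨b, hb⟩ := hvs.exists_orthonormalBasis_extension_of_card_eq hF
  refine ⟨b, fun i hi ↦ ?_⟩
  rw [hb i hi, hv ⟨i, hi⟩]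
  exact Submodule.coe_mem _

theorem exists_orthonormalBasis_span {E : Type*} [NormedAddCommGroup E] [InnerProductSpace 𝕜 E]
    {e : ι → E} (he : Orthonormal 𝕜 e) :
    ∃ a : OrthonormalBasis ι 𝕜 (Submodule.span 𝕜 (Set.range e)), ∀ i, (a i : E) = e i := by
  let B := Basis.span he.linearIndependent
  have hB : Orthonormal 𝕜 B := by
    rw [funext (Basis.span_apply he.linearIndependent)]
    exact orthonormal_span he
  exact ⟨B.toOrthonormalBasis hB, fun i ↦ by simp [B]⟩

variable [DecidableEq ι]

theorem exists_orthonormalBasis_mem_orthogonal {V : Type*} [NormedAddCommGroup V]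
    [InnerProductSpace 𝕜 V] (F E : Submodule 𝕜 V) [FiniteDimensional 𝕜 F] [FiniteDimensional 𝕜 E]
    (hF : finrank 𝕜 F = Fintype.card ι) {s : Finset ι} (hE : finrank 𝕜 E ≤ s.card) :
    ∃ b : OrthonormalBasis ι 𝕜 F, ∀ i ∈ sᶜ, (b i : V) ∈ Eᗮ := by
  let P : F →ₗ[𝕜] E := E.orthogonalProjectionOnto.toLinearMap ∘ₗ F.subtype
  have hker : sᶜ.card ≤ finrank 𝕜 (LinearMap.ker P) := by
    have := P.finrank_range_add_finrank_ker
    have := (LinearMap.range P).finrank_le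
    rw [Finset.card_compl]
    omega
  obtain ⟨b, hb⟩ := exists_orthonormalBasis_mem_of_card_le_finrank hF _ hker
  exact ⟨b, fun i hi ↦ E.orthogonalProjectionOnto_eq_zero_iff.mp (hb i hi)⟩

/-- **Hadamard's inequality**, for the rows of a matrix. -/
theorem det_sq_le_prod_sum_sq (A : Matrix ι ι ℝ) : A.det ^ 2 ≤ ∏ i, ∑ j, A i j ^ 2 := by
  let σ := Fintype.equivFin ι
  let b := (EuclideanSpace.basisFun ι ℝ).reindex σ
  let v : Fin (Fintype.card ι) → EuclideanSpace ℝ ι := fun i ↦ WithLp.toLp 2 (A (σ.symm i))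
  have : Fact (finrank ℝ (EuclideanSpace ℝ ι) = Fintype.card ι) := ⟨finrank_euclideanSpace⟩
  have hdet : b.toBasis.det v = A.det := by
    rw [Basis.det_apply, ← Matrix.det_transpose, ← Matrix.det_reindex_self σ A]
    rfl
  have hadamard : |A.det| ≤ ∏ i, ‖v i‖ := by
    rw [← hdet, ← b.toBasis.orientation.volumeForm_robust' b v]
    exact b.toBasis.orientation.abs_volumeForm_apply_le v
  calc A.det ^ 2 = |A.det| ^ 2 := (sq_abs _).symm
    _ ≤ (∏ i, ‖v i‖) ^ 2 := by gcongr
    _ = ∏ i, ∑ j, A (σ.symm i) j ^ 2 := by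
        simp only [← Finset.prod_pow, EuclideanSpace.real_norm_sq_eq, v]
    _ = ∏ i, ∑ j, A i j ^ 2 := σ.symm.prod_comp fun i ↦ ∑ j, A i j ^ 2

theorem orthonormalBasis_det_sq_eq {F : Type*} [NormedAddCommGroup F] [InnerProductSpace ℝ F]
    (a b : OrthonormalBasis ι ℝ F) (v : ι → F) :
    a.toBasis.det v ^ 2 = b.toBasis.det v ^ 2 := by
  have hmul : a.toBasis.det v = a.toBasis.det b * b.toBasis.det v := by
    simp only [Basis.det_apply, ← Matrix.det_mul, ← b.coe_toBasis, Basis.toMatrix_mul_toMatrix]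
  rcases a.det_to_matrix_orthonormalBasis_real b with h | h <;> rw [hmul, h] <;> ring

end LinearAlgebra

section InnerProductSpace

variable {V ι : Type*} [NormedAddCommGroup V] [InnerProductSpace ℝ V]

theorem sum_inner_sq_le_infDist_sq {e : ι → V} (he : Orthonormal ℝ e) {s : Finset ι}
    {U : Submodule ℝ V} (hU : ∀ i ∈ s, e i ∈ Uᗮ) (x : V) :
    ∑ i ∈ s, inner ℝ (e i) x ^ 2 ≤ Metric.infDist x U ^ 2 := by
  rw [← Real.sqrt_le_left Metric.infDist_nonneg, Metric.le_infDist ⟨0, U.zero_mem⟩]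
  intro y hy
  rw [dist_eq_norm, Real.sqrt_le_left (norm_nonneg _)]
  calc ∑ i ∈ s, inner ℝ (e i) x ^ 2 = ∑ i ∈ s, ‖inner ℝ (e i) (x - y)‖ ^ 2 := by
        refine Finset.sum_congr rfl fun i hi ↦ ?_
        rw [inner_sub_right, U.inner_left_of_mem_orthogonal hy (hU i hi), sub_zero,
          Real.norm_eq_abs, sq_abs]
    _ ≤ ‖x - y‖ ^ 2 := he.sum_inner_products_le _

variable [Fintype ι] [DecidableEq ι]

theorem det_inner_sq_eq {F : Submodule ℝ V} [F.HasOrthogonalProjection]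
    (a b : OrthonormalBasis ι ℝ F) (v : ι → V) :
    (Matrix.of fun i j ↦ inner ℝ (a i : V) (v j)).det ^ 2 =
      (Matrix.of fun i j ↦ inner ℝ (b i : V) (v j)).det ^ 2 := by
  have hcoord (c : OrthonormalBasis ι ℝ F) : (Matrix.of fun i j ↦ inner ℝ (c i : V) (v j)).det =
      c.toBasis.det fun j ↦ F.orthogonalProjectionOnto (v j) := by
    rw [Basis.det_apply]
    congr 1
    ext i j
    simp only [Matrix.of_apply, Basis.toMatrix_apply, OrthonormalBasis.coe_toBasis_repr_apply,
      OrthonormalBasis.repr_apply_apply, Submodule.inner_orthogonalProjectionOnto_eq_of_mem_left]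
  rw [hcoord, hcoord, orthonormalBasis_det_sq_eq a b]

theorem det_inner_sq_le {e : ι → V} (he : Orthonormal ℝ e) (v : ι → V) {U : Submodule ℝ V}
    (hU : ∀ i, e i ∈ Uᗮ) (E : Submodule ℝ V) [FiniteDimensional ℝ E] {s : Finset ι}
    (hE : finrank ℝ E ≤ s.card) :
    (Matrix.of fun i j ↦ inner ℝ (e i) (v j)).det ^ 2 ≤
      ((∑ j, Metric.infDist (v j) U ^ 2) / s.card) ^ s.card *
        ((∑ j, Metric.infDist (v j) E ^ 2) / sᶜ.card) ^ sᶜ.card := by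
  let F := Submodule.span ℝ (Set.range e)
  obtain ⟨a, ha⟩ : ∃ a : OrthonormalBasis ι ℝ F, ∀ i, (a i : V) = e i :=
    exists_orthonormalBasis_span he
  have hF : finrank ℝ F = Fintype.card ι := finrank_eq_card_basis a.toBasis
  have : FiniteDimensional ℝ F := .span_of_finite ℝ (Set.finite_range e)
  obtain ⟨b, hbE⟩ := exists_orthonormalBasis_mem_orthogonal F E hF hE
  have hb : Orthonormal ℝ fun i ↦ (b i : V) := b.orthonormal.comp_linearIsometry F.subtypeₗᵢ
  have hFU : F ≤ Uᗮ := Submodule.span_le.mpr (Set.range_subset_iff.mpr hU)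
  have hrows {t : Finset ι} {W : Submodule ℝ V} (hW : ∀ i ∈ t, (b i : V) ∈ Wᗮ) :
      ∏ i ∈ t, ∑ j, inner ℝ (b i : V) (v j) ^ 2 ≤
        ((∑ j, Metric.infDist (v j) W ^ 2) / t.card) ^ t.card := by
    refine (prod_le_sum_div_card_pow t fun i _ ↦ by positivity).trans ?_
    rw [Finset.sum_comm]
    gcongr with j
    exact sum_inner_sq_le_infDist_sq hb hW (v j)
  calc (Matrix.of fun i j ↦ inner ℝ (e i) (v j)).det ^ 2
      = (Matrix.of fun i j ↦ inner ℝ (b i : V) (v j)).det ^ 2 := by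
        simp only [← ha]
        exact det_inner_sq_eq a b v
    _ ≤ ∏ i, ∑ j, inner ℝ (b i : V) (v j) ^ 2 := det_sq_le_prod_sum_sq _
    _ = (∏ i ∈ s, ∑ j, inner ℝ (b i : V) (v j) ^ 2) *
          ∏ i ∈ sᶜ, ∑ j, inner ℝ (b i : V) (v j) ^ 2 := (Finset.prod_mul_prod_compl s _).symm
    _ ≤ _ := by
        have hU : ∀ i ∈ s, (b i : V) ∈ Uᗮ := fun i _ ↦ hFU (b i).2
        exact mul_le_mul (hrows hU) (hrows hbE) (by positivity) (by positivity)

end InnerProductSpace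

section GramSchmidt

section WellOrderedIndex

variable {𝕜 V ι : Type*} [RCLike 𝕜] [NormedAddCommGroup V] [InnerProductSpace 𝕜 V] [LinearOrder ι]
  [LocallyFiniteOrderBot ι] [WellFoundedLT ι] (u : ι → V)

theorem infDist_span_le_norm_gramSchmidt (n : ι) :
    Metric.infDist (u n) (Submodule.span 𝕜 (u '' Set.Iio n)) ≤ ‖gramSchmidt 𝕜 u n‖ := by
  have hmem : u n - gramSchmidt 𝕜 u n ∈ Submodule.span 𝕜 (u '' Set.Iio n) := by
    rw [gramSchmidt_def, sub_sub_cancel, ← span_gramSchmidt_Iio]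
    refine Submodule.sum_mem _ fun i hi ↦ Submodule.span_mono ?_ (Submodule.coe_mem _)
    exact Set.singleton_subset_iff.mpr ⟨i, Finset.mem_Iio.mp hi, rfl⟩
  simpa only [dist_eq_norm, sub_sub_cancel] using Metric.infDist_le_dist_of_mem (x := u n) hmem

theorem inner_gramSchmidtNormed_self (n : ι) :
    inner 𝕜 (gramSchmidtNormed 𝕜 u n) (u n) = ‖gramSchmidt 𝕜 u n‖ := by
  have hself : inner 𝕜 (gramSchmidt 𝕜 u n) (u n) = (‖gramSchmidt 𝕜 u n‖ : 𝕜) ^ 2 := by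
    conv_lhs => rw [gramSchmidt_def'' 𝕜 u n]
    rw [inner_add_right, inner_sum, inner_self_eq_norm_sq_to_K, Finset.sum_eq_zero, add_zero]
    intro i hi
    rw [inner_smul_right, gramSchmidt_orthogonal 𝕜 u (Finset.mem_Iio.mp hi).ne', mul_zero]
  rw [gramSchmidtNormed, inner_smul_left, hself, map_inv₀, RCLike.conj_ofReal, pow_two, ← mul_assoc]
  exact inv_mul_mul_self _

theorem inner_gramSchmidtNormed_eq_zero {i j : ι} (h : j < i) :
    inner 𝕜 (gramSchmidtNormed 𝕜 u i) (u j) = 0 := by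
  rw [gramSchmidtNormed, inner_smul_left, gramSchmidt_inv_triangular 𝕜 u h, mul_zero]

theorem gramSchmidtNormed_mem_orthogonal_span {m n : ι} (h : m ≤ n) :
    gramSchmidtNormed 𝕜 u n ∈ (Submodule.span 𝕜 (u '' Set.Iio m))ᗮ := by
  rw [← Submodule.span_singleton_le_iff_mem, ← Submodule.isOrtho_iff_le, Submodule.isOrtho_span]
  rintro _ rfl _ ⟨j, hj, rfl⟩
  exact inner_gramSchmidtNormed_eq_zero u (hj.trans_le h)

end WellOrderedIndex

variable {V : Type*} [NormedAddCommGroup V] [InnerProductSpace ℝ V] (u : ℕ → V)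

theorem det_inner_gramSchmidtNormed (N k : ℕ) :
    (Matrix.of fun i j : Fin k ↦ inner ℝ (gramSchmidtNormed ℝ u (N + i)) (u (N + j))).det =
      ∏ i ∈ Finset.range k, ‖gramSchmidt ℝ u (N + i)‖ := by
  rw [Matrix.det_of_isUpperTriangular, ← Fin.prod_univ_eq_prod_range]
  · simp only [Matrix.of_apply, inner_gramSchmidtNormed_self, RCLike.ofReal_real_eq_id, id]
  · exact fun i j hij ↦ inner_gramSchmidtNormed_eq_zero u (Nat.add_lt_add_left hij N)

theorem prod_norm_gramSchmidt_sq_le (N : ℕ) {m l : ℕ} (E : Submodule ℝ V) [FiniteDimensional ℝ E]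
    (hE : finrank ℝ E ≤ m) :
    ∏ i ∈ Finset.range (m + l), ‖gramSchmidt ℝ u (N + i)‖ ^ 2 ≤
      ((∑ i ∈ Finset.range (m + l),
        Metric.infDist (u (N + i)) (Submodule.span ℝ (u '' Set.Iio N)) ^ 2) / m) ^ m *
      ((∑ i ∈ Finset.range (m + l), Metric.infDist (u (N + i)) E ^ 2) / l) ^ l := by
  by_cases hzero : ∃ i ∈ Finset.range (m + l), gramSchmidt ℝ u (N + i) = 0
  · obtain ⟨i, hi, h0⟩ := hzero
    rw [Finset.prod_eq_zero hi (by rw [h0, norm_zero, zero_pow two_ne_zero])]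
    positivity
  push Not at hzero
  let ι := Fin (m + l)
  have hne (i : ι) : gramSchmidtNormed ℝ u (N + i) ≠ 0 := by
    simpa [gramSchmidtNormed] using hzero i (Finset.mem_range.mpr i.2)
  have horth : Orthonormal ℝ fun i : ι ↦ gramSchmidtNormed ℝ u (N + i) :=
    (gramSchmidtNormed_orthonormal' u).comp (fun i : ι ↦ ⟨N + i, hne i⟩) fun i j hij ↦
      Fin.ext (Nat.add_left_cancel (Subtype.ext_iff.mp hij))
  obtain ⟨s, hs⟩ : ∃ s : Finset ι, s.card = m :=
    (Finset.exists_subset_card_eq (s := Finset.univ) (by simp [ι])).imp fun _ h ↦ h.2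
  have hsc : sᶜ.card = l := by simp [Finset.card_compl, hs, ι]
  have hdet := det_inner_sq_le horth (fun j ↦ u (N + j))
    (fun i ↦ gramSchmidtNormed_mem_orthogonal_span u (Nat.le_add_right N i)) E (hE.trans_eq hs.symm)
  rw [det_inner_gramSchmidtNormed, hs, hsc] at hdet
  simpa only [Finset.prod_pow, Finset.sum_range] using hdet

end GramSchmidt

/-- The worst-case error `sup_{u ∈ K} ‖u - P_E u‖` of approximating `K` by the subspace `E`, of
which the greedy error and the Kolmogorov width are instances. The distance `infDist u E`
replaces the projection error, so that `E` need not be closed. As a supremum of reals, it is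
`0` by convention when `K` is not bounded modulo `E`. -/
noncomputable def approxErr {V : Type*} [NormedAddCommGroup V] [InnerProductSpace ℝ V] (K : Set V)
    (E : Submodule ℝ V) : ℝ :=
  ⨆ x ∈ K, Metric.infDist x E

section Greedy

variable {V : Type*} [NormedAddCommGroup V] [InnerProductSpace ℝ V] {K : Set V} {u : ℕ → V} {γ : ℝ}

theorem approxErr_nonneg (K : Set V) (E : Submodule ℝ V) : 0 ≤ approxErr K E :=
  Real.iSup_nonneg fun _ ↦ Real.iSup_nonneg fun _ ↦ Metric.infDist_nonneg

theorem infDist_le_approxErr (hK : Bornology.IsBounded K) (E : Submodule ℝ V) {x : V} (hx : x ∈ K) :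
    Metric.infDist x E ≤ approxErr K E := by
  obtain ⟨R, hR⟩ := hK.exists_norm_le
  have hbound : ∀ y ∈ K, Metric.infDist y E ≤ R := fun y hy ↦
    (Metric.infDist_le_dist_of_mem E.zero_mem).trans (by simpa using hR y hy)
  have hbdd : BddAbove (Set.range fun y ↦ ⨆ _ : y ∈ K, Metric.infDist y E) := by
    refine ⟨R, Set.forall_mem_range.mpr fun y ↦ ?_⟩
    exact Real.iSup_le (hbound y) ((norm_nonneg x).trans (hR x hx))
  calc Metric.infDist x E = ⨆ _ : x ∈ K, Metric.infDist x E :=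
        (ciSup_pos (f := fun _ ↦ Metric.infDist x E) hx).symm
    _ ≤ approxErr K E := le_ciSup hbdd x

theorem approxErr_anti (hK : Bornology.IsBounded K) : Antitone (approxErr K) := by
  intro E E' hEE'
  refine Real.iSup_le (fun x ↦ Real.iSup_le (fun hx ↦ ?_) (approxErr_nonneg K E))
    (approxErr_nonneg K E)
  exact (Metric.infDist_le_infDist_of_subset hEE' ⟨0, E.zero_mem⟩).trans
    (infDist_le_approxErr hK E hx)

theorem greedyErr_nonneg (u : ℕ → V) (K : Set V) (n : ℕ) : 0 ≤ greedyErr u K n :=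
  approxErr_nonneg K _

theorem greedyErr_anti (hK : Bornology.IsBounded K) (u : ℕ → V) : Antitone (greedyErr u K) :=
  fun _ _ h ↦ approxErr_anti hK (Submodule.span_mono (Set.image_mono (Set.Iio_subset_Iio h)))

theorem le_mul_kolWidth {n : ℕ} {a c : ℝ} (ha : 0 ≤ a)
    (h : ∀ E : Submodule ℝ V, Module.rank ℝ E ≤ n → c ≤ a * approxErr K E) :
    c ≤ a * kolWidth K n := by
  have : Nonempty {E : Submodule ℝ V // Module.rank ℝ E ≤ (n : Cardinal)} := ⟨⟨⊥, by simp⟩⟩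
  rw [kolWidth, Real.mul_iInf_of_nonneg ha]
  exact le_ciInf fun E ↦ h E.1 E.2

theorem greedyErr_zero_le_kolWidth (u : ℕ → V) (K : Set V) : greedyErr u K 0 ≤ kolWidth K 0 := by
  rw [← one_mul (kolWidth K 0)]
  refine le_mul_kolWidth zero_le_one fun E hE ↦ ?_
  have hbot : E = ⊥ := by simpa using hE
  have hspan : Submodule.span ℝ (u '' Set.Iio 0) = ⊥ := by simp
  rw [greedyErr, hspan, hbot, one_mul, approxErr]

namespace IsWeakGreedy

theorem mul_greedyErr_le_norm_gramSchmidt (hg : IsWeakGreedy u K γ) (n : ℕ) :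
    γ * greedyErr u K n ≤ ‖gramSchmidt ℝ u n‖ :=
  (hg n).trans (infDist_span_le_norm_gramSchmidt u n)

theorem prod_greedyErr_sq_le (hg : IsWeakGreedy u K γ) (hγ : 0 ≤ γ) (hK : Bornology.IsBounded K)
    (hu : ∀ n, u n ∈ K) (N : ℕ) {m l : ℕ} (E : Submodule ℝ V) [FiniteDimensional ℝ E]
    (hE : finrank ℝ E ≤ m) :
    ∏ i ∈ Finset.range (m + l), (γ * greedyErr u K (N + i)) ^ 2 ≤
      ((m + l) / m * greedyErr u K N ^ 2) ^ m * ((m + l) / l * approxErr K E ^ 2) ^ l := by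
  have hsum (W : Submodule ℝ V) :
      ∑ i ∈ Finset.range (m + l), Metric.infDist (u (N + i)) W ^ 2 ≤
        (m + l) * approxErr K W ^ 2 := by
    refine (Finset.sum_le_card_nsmul _ _ (approxErr K W ^ 2) fun i _ ↦ ?_).trans_eq (by simp)
    exact pow_le_pow_left₀ Metric.infDist_nonneg (infDist_le_approxErr hK W (hu _)) 2
  have hσ (i : ℕ) : 0 ≤ γ * greedyErr u K (N + i) := mul_nonneg hγ (greedyErr_nonneg ..)
  calc ∏ i ∈ Finset.range (m + l), (γ * greedyErr u K (N + i)) ^ 2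
      ≤ ∏ i ∈ Finset.range (m + l), ‖gramSchmidt ℝ u (N + i)‖ ^ 2 := by
        gcongr with i
        · exact hσ i
        · exact hg.mul_greedyErr_le_norm_gramSchmidt _
    _ ≤ _ := prod_norm_gramSchmidt_sq_le u N E hE
    _ ≤ _ := by
        simp only [div_mul_eq_mul_div]
        gcongr
        · exact hsum _
        · exact hsum E

theorem greedyErr_sq_le_mul_approxErr (hg : IsWeakGreedy u K γ) (hγ : 0 ≤ γ)
    (hK : Bornology.IsBounded K) (hu : ∀ n, u n ∈ K) (N : ℕ) {m : ℕ} (hm : m ≠ 0)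
    (E : Submodule ℝ V) [FiniteDimensional ℝ E] (hE : finrank ℝ E ≤ m) :
    (γ * greedyErr u K (N + 2 * m)) ^ 2 ≤ 2 * greedyErr u K N * approxErr K E := by
  have hσN := greedyErr_nonneg u K N
  have hE0 := approxErr_nonneg K E
  have hm0 : (m : ℝ) ≠ 0 := Nat.cast_ne_zero.mpr hm
  have hσ := mul_nonneg hγ (greedyErr_nonneg u K (N + 2 * m))
  refine le_of_pow_le_pow_left₀ (n := 2 * m) (by omega) (by positivity) ?_
  calc ((γ * greedyErr u K (N + 2 * m)) ^ 2) ^ (2 * m)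
      = ∏ i ∈ Finset.range (m + m), (γ * greedyErr u K (N + 2 * m)) ^ 2 := by
        rw [Finset.prod_const, Finset.card_range, two_mul m]
    _ ≤ ∏ i ∈ Finset.range (m + m), (γ * greedyErr u K (N + i)) ^ 2 := by
        gcongr with i hi
        exact greedyErr_anti hK u (by have := Finset.mem_range.mp hi; omega)
    _ ≤ _ := hg.prod_greedyErr_sq_le hγ hK hu N E hE
    _ = (2 * greedyErr u K N * approxErr K E) ^ (2 * m) := by
        rw [← mul_pow, pow_mul]
        congr 1
        field_simp
        ring

theorem greedyErr_sq_le_mul_kolWidth (hg : IsWeakGreedy u K γ) (hγ : 0 ≤ γ)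
    (hK : Bornology.IsBounded K) (hu : ∀ n, u n ∈ K) (N : ℕ) {m : ℕ} (hm : m ≠ 0) :
    (γ * greedyErr u K (N + 2 * m)) ^ 2 ≤ 2 * greedyErr u K N * kolWidth K m := by
  have hσN := greedyErr_nonneg u K N
  refine le_mul_kolWidth (by positivity) fun E hE ↦ ?_
  have : FiniteDimensional ℝ E := rank_lt_aleph0_iff.mp (hE.trans_lt Cardinal.natCast_lt_aleph0)
  exact hg.greedyErr_sq_le_mul_approxErr hγ hK hu N hm E (finrank_le_of_rank_le hE)

end IsWeakGreedy

end Greedy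

section PolynomialDecay

theorem le_mul_of_sq_le_mul {γ A a b : ℝ} (hγ : 0 < γ) (hA : 0 ≤ A) (hab : 2 * a * b ≤ A * γ ^ 2)
    {σ d φ : ℕ → ℝ} (hσ : Antitone σ) (hσ0 : ∀ n, 0 ≤ σ n) (hφ0 : ∀ n, 0 ≤ φ n)
    (hsq : ∀ N m, m ≠ 0 → (γ * σ (N + 2 * m)) ^ 2 ≤ 2 * σ N * d m) {M : ℕ}
    (hd : ∀ n ≤ M, d n ≤ φ n) (hbase : ∀ n < 4, σ n ≤ A * φ n)
    (hhalf : ∀ n ≥ 4, φ (n / 2) ≤ a * φ n) (hquarter : ∀ n ≥ 4, φ (n / 4) ≤ b * φ n) :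
    ∀ n ≤ M, σ n ≤ A * φ n := by
  intro n
  induction n using Nat.strong_induction_on with
  | _ n ih =>
  intro hn
  rcases lt_or_ge n 4 with hn4 | hn4
  · exact hbase n hn4
  have hN : σ (n / 2) ≤ A * (a * φ n) :=
    (ih _ (by omega) (by omega)).trans (mul_le_mul_of_nonneg_left (hhalf n hn4) hA)
  have hm : d (n / 4) ≤ b * φ n := (hd _ (by omega)).trans (hquarter n hn4)
  have hmono : σ n ≤ σ (n / 2 + 2 * (n / 4)) := hσ (by omega)
  have hsqn : (γ * σ n) ^ 2 ≤ (γ * (A * φ n)) ^ 2 := by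
    calc (γ * σ n) ^ 2 ≤ (γ * σ (n / 2 + 2 * (n / 4))) ^ 2 := by
          have := hσ0 n
          gcongr
      _ ≤ 2 * σ (n / 2) * d (n / 4) := hsq _ _ (by omega)
      _ ≤ 2 * (A * (a * φ n)) * (b * φ n) := by
          have hbφ : 0 ≤ b * φ n := (hφ0 _).trans (hquarter n hn4)
          have hσN := hσ0 (n / 2)
          exact mul_le_mul_of_nonneg (by gcongr) hm (by positivity) hbφ
      _ = 2 * a * b * (A * φ n ^ 2) := by ring
      _ ≤ A * γ ^ 2 * (A * φ n ^ 2) := by gcongr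
      _ = (γ * (A * φ n)) ^ 2 := by ring
  have hAφ : 0 ≤ γ * (A * φ n) := by have := hφ0 n; positivity
  exact le_of_mul_le_mul_left (le_of_sq_le_sq hsqn hAφ) hγ

theorem max_one_rpow_neg_le_of_le_mul {s c x y : ℝ} (hs : 0 ≤ s) (hc : 1 ≤ c) (h : x ≤ c * y) :
    max 1 y ^ (-s) ≤ c ^ s * max 1 x ^ (-s) := by
  have hc0 : 0 < c := one_pos.trans_le hc
  have hmax : max 1 x ≤ c * max 1 y :=
    max_le (one_le_mul_of_one_le_of_one_le hc (le_max_left _ _))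
      (h.trans (mul_le_mul_of_nonneg_left (le_max_right _ _) hc0.le))
  calc max 1 y ^ (-s) ≤ (max 1 x / c) ^ (-s) :=
        Real.rpow_le_rpow_of_nonpos (by positivity) ((div_le_iff₀' hc0).mpr hmax) (by linarith)
    _ = c ^ s * max 1 x ^ (-s) := by
        rw [Real.div_rpow (by positivity) hc0.le, Real.rpow_neg hc0.le, div_inv_eq_mul, mul_comm]

theorem le_rpow_neg_of_sq_le_mul {s γ c : ℝ} (hs : 0 ≤ s) (hγ : γ ∈ Set.Ioc (0 : ℝ) 1) {σ d : ℕ → ℝ}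
    (hσ : Antitone σ) (hσ0 : ∀ n, 0 ≤ σ n) (hσd : σ 0 ≤ d 0)
    (hsq : ∀ N m, m ≠ 0 → (γ * σ (N + 2 * m)) ^ 2 ≤ 2 * σ N * d m) {M : ℕ}
    (hrate : ∀ n ≤ M, d n ≤ c * max 1 (n : ℝ) ^ (-s)) :
    ∀ n ≤ M, σ n ≤ 2 ^ (5 * s + 1) / γ ^ 2 * (c * max 1 (n : ℝ) ^ (-s)) := by
  obtain ⟨hγ0, hγ1⟩ := hγ
  have hσc : σ 0 ≤ c := hσd.trans (by simpa using hrate 0 (Nat.zero_le M))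
  have hc : 0 ≤ c := (hσ0 0).trans hσc
  have hpow : 2 * (4 : ℝ) ^ s * 8 ^ s = 2 ^ (5 * s + 1) := by
    rw [mul_assoc, ← Real.mul_rpow (by norm_num) (by norm_num), Real.rpow_add_one two_ne_zero,
      Real.rpow_mul two_pos.le, mul_comm]
    norm_num
  have hscale {n j : ℕ} (k : ℕ) (hk : 1 ≤ k) (h : n ≤ k * j) :
      c * max 1 (j : ℝ) ^ (-s) ≤ k ^ s * (c * max 1 (n : ℝ) ^ (-s)) := by
    rw [mul_left_comm]
    exact mul_le_mul_of_nonneg_left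
      (max_one_rpow_neg_le_of_le_mul hs (mod_cast hk) (mod_cast h)) hc
  have h4A : (4 : ℝ) ^ s ≤ 2 ^ (5 * s + 1) / γ ^ 2 := by
    calc (4 : ℝ) ^ s = 2 ^ (2 * s) := by rw [Real.rpow_mul two_pos.le]; norm_num
      _ ≤ 2 ^ (5 * s + 1) := Real.rpow_le_rpow_of_exponent_le one_le_two (by linarith)
      _ ≤ 2 ^ (5 * s + 1) / γ ^ 2 :=
          le_div_self (by positivity) (by positivity) (pow_le_one₀ hγ0.le hγ1)
  refine le_mul_of_sq_le_mul (a := 4 ^ s) (b := 8 ^ s) hγ0 (by positivity) ?_ hσ hσ0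
    (fun n ↦ by positivity) hsq hrate (fun n hn ↦ ?_)
    (fun n hn ↦ hscale 4 (by norm_num) (by omega)) (fun n hn ↦ hscale 8 (by norm_num) (by omega))
  · rw [hpow, div_mul_cancel₀ _ (by positivity)]
  · calc σ n ≤ c := (hσ (Nat.zero_le n)).trans hσc
      _ ≤ 4 ^ s * (c * max 1 (n : ℝ) ^ (-s)) := by
          simpa using hscale (j := 1) 4 (by norm_num) (by omega)
      _ ≤ _ := by gcongr

end PolynomialDecay

theorem statement2_general {s γ : ℝ} (hs : 0 ≤ s) (hγ : γ ∈ Set.Ioc (0 : ℝ) 1) {V : Type*}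
    [NormedAddCommGroup V] [InnerProductSpace ℝ V] {K : Set V} (hK : Bornology.IsBounded K)
    {nstar : ℕ} {C0 : ℝ} {u : ℕ → V} (hu : ∀ n, u n ∈ K) (hg : IsWeakGreedy u K γ)
    (hrate : ∀ n ≤ nstar, kolWidth K n ≤ C0 * (max 1 (n : ℝ)) ^ (-s)) :
    ∀ n ≤ nstar, greedyErr u K n ≤ 2 ^ (5 * s + 1) / γ ^ 2 * C0 * (max 1 (n : ℝ)) ^ (-s) := by
  simp only [mul_assoc]
  exact le_rpow_neg_of_sq_le_mul hs hγ (greedyErr_anti hK u) (greedyErr_nonneg u K)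
    (greedyErr_zero_le_kolWidth u K)
    (fun N _ hm ↦ hg.greedyErr_sq_le_mul_kolWidth hγ.1.le hK hu N hm) hrate

theorem statement2 (s γ : ℝ) (hs : 0 < s) (hγ : γ ∈ Set.Ioc (0 : ℝ) 1) :
    ∃ C : ℝ, 0 < C ∧
      ∀ (V : Type u) [NormedAddCommGroup V] [InnerProductSpace ℝ V] [CompleteSpace V]
        (K : Set V), IsCompact K →
        ∀ (nstar : ℕ) (C0 : ℝ), 0 < C0 →
        ∀ u : ℕ → V, (∀ n, u n ∈ K) → IsWeakGreedy u K γ →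
        (∀ n : ℕ, n ≤ nstar → kolWidth K n ≤ C0 * (max 1 (n : ℝ)) ^ (-s)) →
        ∀ n : ℕ, n ≤ nstar → greedyErr u K n ≤ C * C0 * (max 1 (n : ℝ)) ^ (-s) := by
  have hC : 0 < (2 : ℝ) ^ (5 * s + 1) / γ ^ 2 := by have := hγ.1; positivity
  exact ⟨_, hC, fun _ _ _ _ _ hK _ _ _ _ hu hg hrate ↦
    statement2_general hs.le hγ hK.isBounded hu hg hrate⟩
end

section
/- Let V be a real Hilbert space, Λ ⊂ ℕ^d a downward closed set of cardinality m ≥ 1, and P ∈ P_Λ a nonzero V-valued polynomial with M1 := sup_{y∈Y} ‖P(y)‖. Then ρ({ y ∈ Y : ‖P(y)‖ ≥ M1/(2m) }) ≥ 3/(4m²), where Y = [−1,1]^d and ρ is the uniform probability measure on Y. -/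
open MeasureTheory

/-- The parameter cube `Y = [-1,1]^d`. -/
def cube (d : ℕ) : Set (Fin d → ℝ) := Set.univ.pi fun _ => Set.Icc (-1 : ℝ) 1

/-- A finite set `Λ ⊂ ℕ^d` is downward closed if `ν ∈ Λ` and `μ ≤ ν` (componentwise)
imply `μ ∈ Λ`. -/
def DownwardClosed {d : ℕ} (Λ : Finset (Fin d → ℕ)) : Prop :=
  ∀ ν ∈ Λ, ∀ μ : Fin d → ℕ, μ ≤ ν → μ ∈ Λ

/-- The `V`-valued polynomial `y ↦ ∑_{ν ∈ Λ} y^ν • a_ν`, with `y^ν = ∏_j y_j^{ν_j}`. -/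
noncomputable def polyEval {d : ℕ} {V : Type*} [AddCommGroup V] [Module ℝ V]
    (Λ : Finset (Fin d → ℕ)) (a : (Fin d → ℕ) → V) (y : Fin d → ℝ) : V :=
  ∑ ν ∈ Λ, (∏ j, y j ^ ν j) • a ν

/-- `δ_m(v)`: the error of best uniform approximation of `v` on `Y = [-1,1]^d`
by `V`-valued polynomials supported on a downward closed index set of cardinality `m`. -/
noncomputable def deltaApprox {d : ℕ} {V : Type*} [NormedAddCommGroup V] [Module ℝ V]
    (v : (Fin d → ℝ) → V) (m : ℕ) : ℝ :=
  sInf { e | ∃ (Λ : Finset (Fin d → ℕ)) (a : (Fin d → ℕ) → V),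
    DownwardClosed Λ ∧ Λ.card = m ∧ e = ⨆ y ∈ cube d, ‖v y - polyEval Λ a y‖ }

/-- Membership in the approximation class `A^r`: `δ_m(v) ≤ C m^{-r}` for all `m ≥ 1`. -/
def MemA {d : ℕ} {V : Type*} [NormedAddCommGroup V] [Module ℝ V]
    (r : ℝ) (v : (Fin d → ℝ) → V) : Prop :=
  ∃ C : ℝ, 0 ≤ C ∧ ∀ m : ℕ, 1 ≤ m → deltaApprox v m ≤ C * (m : ℝ) ^ (-r)

/-- The seminorm `|v|_{A^r}`: the smallest constant `C ≥ 0` with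
`δ_m(v) ≤ C m^{-r}` for all `m ≥ 1`. -/
noncomputable def semiA {d : ℕ} {V : Type*} [NormedAddCommGroup V] [Module ℝ V]
    (r : ℝ) (v : (Fin d → ℝ) → V) : ℝ :=
  sInf { C | 0 ≤ C ∧ ∀ m : ℕ, 1 ≤ m → deltaApprox v m ≤ C * (m : ℝ) ^ (-r) }

/-- The norm `‖v‖_{A^r} = max{‖v‖_{L^∞(Y,V)}, |v|_{A^r}}`. -/
noncomputable def normA {d : ℕ} {V : Type*} [NormedAddCommGroup V] [Module ℝ V]
    (r : ℝ) (v : (Fin d → ℝ) → V) : ℝ :=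
  max (⨆ y ∈ cube d, ‖v y‖) (semiA r v)

/-- The uniform probability measure on the cube `Y = [-1,1]^d`. -/
noncomputable def uniformCube (d : ℕ) : Measure (Fin d → ℝ) :=
  Measure.pi fun _ => (2 : ENNReal)⁻¹ • (volume.restrict (Set.Icc (-1 : ℝ) 1))

/-!
On the cube, the tensor products of the orthonormal Legendre polynomials satisfy
`|L_ν(y)|² ≤ ∏ j, (2 ν_j + 1)`, and `∏ j, (2 ν_j + 1)` is the number of pairs `(α, β)` with
`α ⊔ β = ν`. If `Λ` is downward closed, all these pairs lie in `Λ × Λ`, so the squares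
`|L_ν(y)|²` sum over `ν ∈ Λ` to at most `m²`. As the `L_ν` with `ν ∈ Λ` span the scalar polynomials
supported on `Λ`, the Cauchy-Schwarz inequality gives `‖P‖_∞ ≤ m ‖P‖_{L²}`; composing with a norming
functional at the point of evaluation extends this to vector values. A function whose `L²` norm is
this large compared with its supremum `M` must be at least `θ M / m` on a set of measure at least
`(1 - θ²) / m²`.
-/

section Legendre

open Polynomial

/-- The Legendre polynomials shifted to `[0, 1]`, over `ℝ`. With Mathlib's normalization the value
at `0`, rather than the value at `1`, equals `1`. -/
noncomputable def legendreSeq : Polynomial.Sequence ℝ where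
  elems' n := (shiftedLegendre n).map (algebraMap ℤ ℝ)
  degree_eq' n := by
    rw [degree_map_eq_of_injective (algebraMap ℤ ℝ).injective_int, degree_shiftedLegendre]

lemma coeff_legendreSeq (n k : ℕ) :
    (legendreSeq n).coeff k = (-1) ^ k * n.choose k * (n + k).choose n := by
  simp [legendreSeq, coeff_shiftedLegendre]

lemma coeff_legendreSeq_succ (n k : ℕ) :
    ((k : ℝ) + 1) ^ 2 * (legendreSeq n).coeff (k + 1) =
      (k * (k + 1) - n * (n + 1)) * (legendreSeq n).coeff k := by
  have choose_succ : (n.choose (k + 1) : ℝ) * (k + 1) = n.choose k * (n - k) := by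
    rcases le_or_gt k n with hkn | hnk
    · exact_mod_cast n.choose_succ_right_eq k
    · simp [Nat.choose_eq_zero_of_lt hnk, Nat.choose_eq_zero_of_lt (hnk.trans k.lt_succ_self)]
  have add_choose_succ :
      ((n + (k + 1)).choose n : ℝ) * (k + 1) = (n + k).choose n * (n + k + 1) := by
    have h := Nat.choose_mul_succ_eq (n + k) n
    rw [show n + k + 1 - n = k + 1 by lia] at h
    exact_mod_cast h.symm
  calc ((k : ℝ) + 1) ^ 2 * (legendreSeq n).coeff (k + 1)
      = (-1) ^ (k + 1) * (n.choose (k + 1) * (k + 1)) *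
          ((n + (k + 1)).choose n * (k + 1)) := by rw [coeff_legendreSeq]; ring
    _ = (k * (k + 1) - n * (n + 1)) * (legendreSeq n).coeff k := by
      rw [choose_succ, add_choose_succ, coeff_legendreSeq]; ring

lemma derivative_mul_derivative_legendreSeq (n : ℕ) :
    derivative ((X - X ^ 2) * derivative (legendreSeq n)) =
      -(C ((n : ℝ) * (n + 1)) * legendreSeq n) := by
  ext k
  have hrec := coeff_legendreSeq_succ n k
  rw [coeff_derivative, coeff_neg, coeff_C_mul, sub_mul, coeff_sub, coeff_X_mul,
    coeff_derivative, pow_two, mul_assoc, coeff_X_mul]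
  cases k with
  | zero =>
    rw [mul_coeff_zero, coeff_X_zero]
    push_cast at hrec ⊢
    linear_combination hrec
  | succ k =>
    rw [coeff_X_mul, coeff_derivative]
    push_cast at hrec ⊢
    linear_combination hrec

lemma eval_zero_legendreSeq (n : ℕ) : (legendreSeq n).eval 0 = 1 := by
  simp [← coeff_zero_eq_eval_zero, coeff_legendreSeq]

lemma eval_one_sub_legendreSeq_sq (n : ℕ) (x : ℝ) :
    (legendreSeq n).eval (1 - x) ^ 2 = (legendreSeq n).eval x ^ 2 := by
  have hsymm : (legendreSeq n).eval x = (-1) ^ n * (legendreSeq n).eval (1 - x) := by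
    simpa only [legendreSeq, eval_map_algebraMap] using shiftedLegendre_eval_symm n x
  rw [hsymm, mul_pow, ← pow_mul, (even_two.mul_left n).neg_one_pow, one_mul]

/-- The Sonin function of the shifted Legendre polynomial `L`, namely
`n (n + 1) L² + x (1 - x) L'²`. It dominates `n (n + 1) L²` on `[0, 1]`. -/
noncomputable def legendreSonin (n : ℕ) : ℝ[X] :=
  C ((n : ℝ) * (n + 1)) * legendreSeq n ^ 2 + (X - X ^ 2) * derivative (legendreSeq n) ^ 2

lemma derivative_legendreSonin (n : ℕ) :
    derivative (legendreSonin n) = -((1 - 2 * X) * derivative (legendreSeq n) ^ 2) := by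
  have hode := derivative_mul_derivative_legendreSeq n
  simp only [legendreSonin, derivative_mul, derivative_add, derivative_sub, derivative_X,
    derivative_C, derivative_pow, Nat.cast_ofNat, map_ofNat] at hode ⊢
  linear_combination 2 * derivative (legendreSeq n) * hode

lemma antitoneOn_eval_legendreSonin (n : ℕ) :
    AntitoneOn (fun x ↦ (legendreSonin n).eval x) (Set.Icc 0 (1 / 2)) := by
  refine antitoneOn_of_deriv_nonpos (convex_Icc _ _) (legendreSonin n).continuous.continuousOn
    (legendreSonin n).differentiable.differentiableOn fun x hx ↦ ?_
  rw [interior_Icc] at hx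
  have h2x : 0 ≤ 1 - 2 * x := by linarith [hx.2]
  simpa [Polynomial.deriv, derivative_legendreSonin] using mul_nonneg h2x (sq_nonneg _)

lemma eval_legendreSeq_sq_le_one_of_le_half (n : ℕ) {x : ℝ} (hx : x ∈ Set.Icc 0 (1 / 2)) :
    (legendreSeq n).eval x ^ 2 ≤ 1 := by
  rcases n.eq_zero_or_pos with rfl | hn
  · rw [eq_C_of_natDegree_eq_zero (legendreSeq.natDegree_eq 0)]
    simp [coeff_legendreSeq]
  have hanti := antitoneOn_eval_legendreSonin n (Set.left_mem_Icc.2 (by norm_num)) hx hx.1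
  simp only [legendreSonin, eval_add, eval_mul, eval_pow, eval_sub, eval_X, eval_C,
    eval_zero_legendreSeq] at hanti
  have hx' : 0 ≤ (x - x ^ 2) * (derivative (legendreSeq n)).eval x ^ 2 :=
    mul_nonneg (by nlinarith [hx.1, hx.2]) (sq_nonneg _)
  refine le_of_mul_le_mul_left (a := (n : ℝ) * (n + 1)) ?_ (by positivity)
  linarith

lemma eval_legendreSeq_sq_le_one (n : ℕ) {x : ℝ} (hx : x ∈ Set.Icc 0 1) :
    (legendreSeq n).eval x ^ 2 ≤ 1 := by
  rcases le_total x (1 / 2) with hhalf | hhalf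
  · exact eval_legendreSeq_sq_le_one_of_le_half n ⟨hx.1, hhalf⟩
  · rw [← eval_one_sub_legendreSeq_sq]
    exact eval_legendreSeq_sq_le_one_of_le_half n ⟨by linarith [hx.2], by linarith⟩

/-- Integration over `[0, 1]` as a linear functional on real polynomials. -/
noncomputable def unitIntegral : ℝ[X] →ₗ[ℝ] ℝ where
  toFun p := ∫ x in (0 : ℝ)..1, p.eval x
  map_add' p q := by
    simp only [eval_add]
    exact intervalIntegral.integral_add (p.continuous.intervalIntegrable _ _)
      (q.continuous.intervalIntegrable _ _)
  map_smul' c p := by simp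

lemma unitIntegral_apply (p : ℝ[X]) : unitIntegral p = ∫ x in (0 : ℝ)..1, p.eval x := rfl

lemma unitIntegral_derivative (p : ℝ[X]) :
    unitIntegral (derivative p) = p.eval 1 - p.eval 0 :=
  intervalIntegral.integral_eq_sub_of_hasDerivAt (fun x _ ↦ p.hasDerivAt x)
    ((derivative p).continuous.intervalIntegrable _ _)

lemma unitIntegral_legendreSeq_mul_of_ne {m n : ℕ} (hmn : m ≠ n) :
    unitIntegral (legendreSeq m * legendreSeq n) = 0 := by
  -- The Legendre operator is symmetric because the weight `x - x²` vanishes at both endpoints.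
  set w : ℝ[X] := (X - X ^ 2) * derivative (legendreSeq m) * legendreSeq n -
    (X - X ^ 2) * derivative (legendreSeq n) * legendreSeq m with hw
  have hderiv : derivative w =
      ((n : ℝ) * (n + 1) - m * (m + 1)) • (legendreSeq m * legendreSeq n) := by
    rw [hw, derivative_sub, derivative_mul (f := (X - X ^ 2) * derivative (legendreSeq m)),
      derivative_mul (f := (X - X ^ 2) * derivative (legendreSeq n)),
      derivative_mul_derivative_legendreSeq, derivative_mul_derivative_legendreSeq,
      smul_eq_C_mul, C_sub]
    ring
  have hint := unitIntegral_derivative w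
  rw [hderiv, map_smul, smul_eq_mul, show w.eval 1 - w.eval 0 = 0 by simp [hw]] at hint
  refine (mul_eq_zero.1 hint).resolve_left fun heq ↦ hmn ?_
  have hfactor : ((n : ℝ) - m) * (n + m + 1) = 0 := by linear_combination heq
  have hpos : (n : ℝ) + m + 1 ≠ 0 := by positivity
  exact_mod_cast (sub_eq_zero.1 ((mul_eq_zero.1 hfactor).resolve_right hpos)).symm

lemma isUnit_leadingCoeff_legendreSeq (n : ℕ) : IsUnit (legendreSeq n).leadingCoeff :=
  (leadingCoeff_ne_zero.2 (legendreSeq.ne_zero n)).isUnit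

lemma unitIntegral_mul_legendreSeq_of_degree_lt {n : ℕ} {p : ℝ[X]} (hp : p.degree < n) :
    unitIntegral (p * legendreSeq n) = 0 := by
  have hspan : p ∈ Submodule.span ℝ (legendreSeq '' Set.Iio n) := by
    rwa [legendreSeq.span_degreeLT fun k _ ↦ isUnit_leadingCoeff_legendreSeq k, mem_degreeLT]
  clear hp
  induction hspan using Submodule.span_induction with
  | mem q hq =>
    obtain ⟨k, hk, rfl⟩ := hq
    exact unitIntegral_legendreSeq_mul_of_ne hk.ne
  | zero => simp
  | add q r _ _ hq hr => rw [add_mul, map_add, hq, hr, add_zero]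
  | smul c q _ hq => rw [smul_mul_assoc, map_smul, hq, smul_zero]

lemma degree_X_mul_derivative_sub_lt {R : Type*} [CommRing R] {p : R[X]} {n : ℕ}
    (hp : p.natDegree ≤ n) : (X * derivative p - C (n : R) * p).degree < (n : WithBot ℕ) := by
  rw [degree_lt_iff_coeff_zero]
  rintro (_ | k) hk
  · simp [Nat.le_zero.1 hk]
  · rw [coeff_sub, coeff_C_mul, coeff_X_mul, coeff_derivative]
    rcases hk.lt_or_eq with hlt | rfl
    · simp [coeff_eq_zero_of_natDegree_lt (hp.trans_lt hlt)]
    · push_cast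
      ring

lemma unitIntegral_legendreSeq_sq (n : ℕ) :
    (2 * (n : ℝ) + 1) * unitIntegral (legendreSeq n * legendreSeq n) = 1 := by
  have hderiv : derivative (X * (legendreSeq n * legendreSeq n)) =
      (2 * (n : ℝ) + 1) • (legendreSeq n * legendreSeq n) +
        (2 : ℝ) • ((X * derivative (legendreSeq n) - C (n : ℝ) * legendreSeq n) *
          legendreSeq n) := by
    simp only [derivative_mul, derivative_X, smul_eq_C_mul, C_add, C_mul, C_1, map_ofNat]
    ring
  have hone : (legendreSeq n).eval 1 * (legendreSeq n).eval 1 = 1 := by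
    rw [← pow_two, ← eval_one_sub_legendreSeq_sq, sub_self, eval_zero_legendreSeq, one_pow]
  have hint := unitIntegral_derivative (X * (legendreSeq n * legendreSeq n))
  rw [hderiv, map_add, map_smul, map_smul,
    unitIntegral_mul_legendreSeq_of_degree_lt (degree_X_mul_derivative_sub_lt
      (legendreSeq.natDegree_eq n).le)]
    at hint
  simpa [hone] using hint

end Legendre

section LowerSet

variable {ι : Type*} [Fintype ι]

open scoped Classical in
lemma card_filter_sup_eq (ν : ι → ℕ) :
    (Finset.filter (fun p : (ι → ℕ) × (ι → ℕ) ↦ p.1 ⊔ p.2 = ν)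
      (Finset.Iic ν ×ˢ Finset.Iic ν)).card = ∏ i, (2 * ν i + 1) := by
  have card_max (k : ℕ) : (Finset.filter (fun p : ℕ × ℕ ↦ max p.1 p.2 = k)
      (Finset.Iic k ×ˢ Finset.Iic k)).card = 2 * k + 1 := by
    have hset : Finset.filter (fun p : ℕ × ℕ ↦ max p.1 p.2 = k) (Finset.Iic k ×ˢ Finset.Iic k) =
        (Finset.Iic k ×ˢ Finset.Iic k) \ (Finset.Iio k ×ˢ Finset.Iio k) := by
      ext ⟨a, b⟩
      simp only [Finset.mem_filter, Finset.mem_sdiff, Finset.mem_product, Finset.mem_Iic,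
        Finset.mem_Iio]
      lia
    rw [hset, Finset.card_sdiff_of_subset (Finset.product_subset_product
      Finset.Iio_subset_Iic_self Finset.Iio_subset_Iic_self)]
    simp only [Finset.card_product, Nat.card_Iic, Nat.card_Iio]
    lia
  rw [← Finset.prod_congr rfl fun i _ ↦ card_max (ν i), ← Fintype.card_piFinset]
  refine (Finset.card_equiv (Equiv.arrowProdEquivProdArrow ι (fun _ ↦ ℕ) fun _ ↦ ℕ) ?_).symm
  intro p
  simp only [Fintype.mem_piFinset, Finset.mem_filter, Finset.mem_product, Finset.mem_Iic,
    Equiv.arrowProdEquivProdArrow_apply, Pi.le_def, funext_iff, Pi.sup_apply]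
  grind

lemma sum_prod_two_mul_add_one_le_card_sq {Λ : Finset (ι → ℕ)}
    (hΛ : IsLowerSet (Λ : Set (ι → ℕ))) : ∑ ν ∈ Λ, ∏ i, (2 * ν i + 1) ≤ Λ.card ^ 2 := by
  classical
  calc ∑ ν ∈ Λ, ∏ i, (2 * ν i + 1)
      = ∑ ν ∈ Λ, (Finset.filter (fun p ↦ p.1 ⊔ p.2 = ν) (Finset.Iic ν ×ˢ Finset.Iic ν)).card := by
        simp_rw [card_filter_sup_eq]
    _ ≤ ∑ ν ∈ Λ, (Finset.filter (fun p ↦ p.1 ⊔ p.2 = ν) (Λ ×ˢ Λ)).card := by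
        refine Finset.sum_le_sum fun ν hν ↦ Finset.card_le_card (Finset.filter_subset_filter _ ?_)
        have hsub : Finset.Iic ν ⊆ Λ := fun μ hμ ↦ hΛ (Finset.mem_Iic.1 hμ) hν
        exact Finset.product_subset_product hsub hsub
    _ ≤ (Λ ×ˢ Λ).card := 
        (Finset.sum_card_fiberwise_eq_card_filter _ _ _).trans_le (Finset.card_filter_le _ _)
    _ = Λ.card ^ 2 := by rw [Finset.card_product, pow_two]

end LowerSet

section L2Orthonormal

/-- Orthonormality in `L²(μ)` of a family of functions, as opposed to almost everywhere classes:
pointwise values of the family are needed to bound pointwise values of its linear combinations. -/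
structure IsL2Orthonormal {α ι : Type*} [MeasurableSpace α] (μ : Measure α) (e : ι → α → ℝ) :
    Prop where
  integrable_mul : ∀ i j, Integrable (fun x ↦ e i x * e j x) μ
  integral_mul_of_ne : ∀ i j, i ≠ j → ∫ x, e i x * e j x ∂μ = 0
  integral_mul_self : ∀ i, ∫ x, e i x * e i x ∂μ = 1

variable {α ι : Type*} [MeasurableSpace α] {μ : Measure α}

lemma IsL2Orthonormal.integral_sum_sq {e : ι → α → ℝ} (he : IsL2Orthonormal μ e) (s : Finset ι)
    (c : ι → ℝ) : ∫ x, (∑ i ∈ s, c i * e i x) ^ 2 ∂μ = ∑ i ∈ s, c i ^ 2 := by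
  have hsq (x : α) : (∑ i ∈ s, c i * e i x) ^ 2 =
      ∑ i ∈ s, ∑ j ∈ s, c i * c j * (e i x * e j x) := by
    rw [pow_two, Finset.sum_mul_sum]
    exact Finset.sum_congr rfl fun i _ ↦ Finset.sum_congr rfl fun j _ ↦ by ring
  have hint (i j : ι) : Integrable (fun x ↦ c i * c j * (e i x * e j x)) μ :=
    (he.integrable_mul i j).const_mul _
  simp_rw [hsq]
  rw [integral_finsetSum _ fun i _ ↦ integrable_finsetSum _ fun j _ ↦ hint i j]
  refine Finset.sum_congr rfl fun i hi ↦ ?_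
  rw [integral_finsetSum _ fun j _ ↦ hint i j, Finset.sum_eq_single_of_mem i hi fun j _ hji ↦ by
    rw [integral_const_mul, he.integral_mul_of_ne i j hji.symm, mul_zero]]
  rw [integral_const_mul, he.integral_mul_self, mul_one, pow_two]

lemma IsL2Orthonormal.sq_le_of_mem_span {e : ι → α → ℝ} (he : IsL2Orthonormal μ e)
    {s : Finset ι} {f : α → ℝ} (hf : f ∈ Submodule.span ℝ (e '' s)) (y : α) :
    f y ^ 2 ≤ (∑ i ∈ s, e i y ^ 2) * ∫ x, f x ^ 2 ∂μ := by
  obtain ⟨c, rfl⟩ := (Submodule.mem_span_image_finset_iff_exists_fun' ℝ).1 hf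
  simp only [Finset.sum_apply, Pi.smul_apply, smul_eq_mul]
  rw [he.integral_sum_sq, mul_comm]
  exact Finset.sum_mul_sq_le_sq_mul_sq s c fun i ↦ e i y

end L2Orthonormal

section Tensor

variable {α ι κ : Type*} [Fintype ι]

/-- The tensor products `y ↦ ∏ i, φ (ν i) (y i)` of functions from a one-variable family `φ`. -/
def tensorFamily (φ : κ → α → ℝ) (ν : ι → κ) (y : ι → α) : ℝ :=
  ∏ i, φ (ν i) (y i)

lemma prod_mem_span_tensorFamily [DecidableEq ι] {φ : κ → α → ℝ} {f : ι → α → ℝ}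
    {s : ι → Finset κ} (hf : ∀ i, f i ∈ Submodule.span ℝ (φ '' s i)) :
    (fun y : ι → α ↦ ∏ i, f i (y i)) ∈
      Submodule.span ℝ (tensorFamily φ '' Fintype.piFinset s) := by
  simp only [Submodule.mem_span_image_finset_iff_exists_fun'] at hf ⊢
  choose c hc using hf
  refine ⟨fun ν ↦ ∏ i, c i (ν i), funext fun y ↦ ?_⟩
  simp [tensorFamily, ← hc, Finset.prod_univ_sum, Finset.prod_mul_distrib]

lemma IsL2Orthonormal.tensor [MeasurableSpace α] {μ : Measure α} [SigmaFinite μ]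
    {φ : κ → α → ℝ} (hφ : IsL2Orthonormal μ φ) :
    IsL2Orthonormal (Measure.pi fun _ : ι ↦ μ) (tensorFamily φ) where
  integrable_mul ν ξ := by
    simp only [tensorFamily, ← Finset.prod_mul_distrib]
    exact Integrable.fintype_prod (f := fun i t ↦ φ (ν i) t * φ (ξ i) t)
      fun i ↦ hφ.integrable_mul (ν i) (ξ i)
  integral_mul_of_ne ν ξ hνξ := by
    obtain ⟨i, hi⟩ := Function.ne_iff.1 hνξ
    simp only [tensorFamily, ← Finset.prod_mul_distrib]
    rw [integral_fintype_prod_eq_prod fun i t ↦ φ (ν i) t * φ (ξ i) t]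
    exact Finset.prod_eq_zero (Finset.mem_univ i) (hφ.integral_mul_of_ne _ _ hi)
  integral_mul_self ν := by
    simp only [tensorFamily, ← Finset.prod_mul_distrib]
    rw [integral_fintype_prod_eq_prod fun i t ↦ φ (ν i) t * φ (ν i) t]
    exact Finset.prod_eq_one fun i _ ↦ hφ.integral_mul_self _

end Tensor

section LegendreFun

open Polynomial

/-- The uniform probability measure on `[-1, 1]`. -/
noncomputable def uniformInterval : Measure ℝ :=
  (2 : ENNReal)⁻¹ • volume.restrict (Set.Icc (-1 : ℝ) 1)

instance : IsProbabilityMeasure uniformInterval where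
  measure_univ := by
    rw [uniformInterval, Measure.smul_apply, Measure.restrict_apply_univ, Real.volume_Icc,
      smul_eq_mul, sub_neg_eq_add, one_add_one_eq_two, ENNReal.ofReal_ofNat]
    exact ENNReal.inv_mul_cancel two_ne_zero ENNReal.ofNat_ne_top

lemma ae_mem_Icc_uniformInterval : ∀ᵐ t ∂uniformInterval, t ∈ Set.Icc (-1 : ℝ) 1 :=
  Measure.ae_smul_measure (ae_restrict_mem measurableSet_Icc) _

lemma integrable_uniformInterval {E : Type*} [NormedAddCommGroup E] {f : ℝ → E}
    (hf : Continuous f) : Integrable f uniformInterval :=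
  hf.integrableOn_Icc.smul_measure (ENNReal.inv_ne_top.2 two_ne_zero)

lemma integral_uniformInterval {E : Type*} [NormedAddCommGroup E] [NormedSpace ℝ E] (f : ℝ → E) :
    ∫ t, f ((t + 1) / 2) ∂uniformInterval = ∫ x in (0 : ℝ)..1, f x := by
  rw [uniformInterval, integral_smul_measure, integral_Icc_eq_integral_Ioc,
    ← intervalIntegral.integral_of_le (by norm_num)]
  simp_rw [add_div]
  rw [intervalIntegral.integral_comp_div_add f two_ne_zero, smul_smul]
  norm_num

/-- The Legendre polynomials as functions, normalized to be orthonormal for the uniform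
probability measure on `[-1, 1]`. -/
noncomputable def legendreFun (n : ℕ) (t : ℝ) : ℝ :=
  √(2 * n + 1) * (legendreSeq n).eval ((t + 1) / 2)

@[fun_prop]
lemma continuous_legendreFun (n : ℕ) : Continuous (legendreFun n) := by
  unfold legendreFun
  fun_prop

lemma legendreFun_sq_le (n : ℕ) {t : ℝ} (ht : t ∈ Set.Icc (-1) 1) :
    legendreFun n t ^ 2 ≤ 2 * n + 1 := by
  have hsq : (legendreSeq n).eval ((t + 1) / 2) ^ 2 ≤ 1 :=
    eval_legendreSeq_sq_le_one n ⟨by linarith [ht.1], by linarith [ht.2]⟩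
  rw [legendreFun, mul_pow, Real.sq_sqrt (by positivity)]
  exact mul_le_of_le_one_right (by positivity) hsq

lemma integral_legendreFun_mul (m n : ℕ) :
    ∫ t, legendreFun m t * legendreFun n t ∂uniformInterval =
      √(2 * m + 1) * √(2 * n + 1) * unitIntegral (legendreSeq m * legendreSeq n) := by
  simp only [legendreFun, mul_mul_mul_comm, integral_const_mul, ← eval_mul]
  rw [integral_uniformInterval fun x ↦ (legendreSeq m * legendreSeq n).eval x,
    unitIntegral_apply]

lemma isL2Orthonormal_legendreFun : IsL2Orthonormal uniformInterval legendreFun where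
  integrable_mul m n := integrable_uniformInterval (by fun_prop)
  integral_mul_of_ne m n hmn := by
    rw [integral_legendreFun_mul, unitIntegral_legendreSeq_mul_of_ne hmn, mul_zero]
  integral_mul_self n := by
    rw [integral_legendreFun_mul, Real.mul_self_sqrt (by positivity), unitIntegral_legendreSeq_sq]

lemma eval_mem_span_legendreFun {p : ℝ[X]} {n : ℕ} (hp : p.natDegree ≤ n) :
    (fun t : ℝ ↦ p.eval ((t + 1) / 2)) ∈ Submodule.span ℝ (legendreFun '' Set.Iic n) := by
  have hspan : p ∈ Submodule.span ℝ (legendreSeq '' Set.Iic n) := by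
    rwa [legendreSeq.span_degreeLE fun k _ ↦ isUnit_leadingCoeff_legendreSeq k, mem_degreeLE,
      ← natDegree_le_iff_degree_le]
  clear hp
  induction hspan using Submodule.span_induction with
  | mem q hq =>
    obtain ⟨k, hk, rfl⟩ := hq
    have hsqrt : √(2 * (k : ℝ) + 1) ≠ 0 := by positivity
    have heq : (fun t : ℝ ↦ (legendreSeq k).eval ((t + 1) / 2)) =
        (√(2 * (k : ℝ) + 1))⁻¹ • legendreFun k :=
      funext fun t ↦ (inv_mul_cancel_left₀ hsqrt _).symm
    rw [heq]
    exact Submodule.smul_mem _ _ (Submodule.subset_span ⟨k, hk, rfl⟩)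
  | zero =>
    simp only [eval_zero]
    exact Submodule.zero_mem _
  | add q r _ _ hq hr =>
    simp only [eval_add]
    exact Submodule.add_mem _ hq hr
  | smul c q _ hq =>
    simp only [eval_smul]
    exact Submodule.smul_mem _ c hq

lemma pow_mem_span_legendreFun (n : ℕ) :
    (fun t : ℝ ↦ t ^ n) ∈ Submodule.span ℝ (legendreFun '' Set.Iic n) := by
  have hdeg : ((2 * X - 1 : ℝ[X]) ^ n).natDegree ≤ n :=
    (natDegree_pow_le_of_le n (by compute_degree : (2 * X - 1 : ℝ[X]).natDegree ≤ 1)).trans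
      (mul_one n).le
  convert! eval_mem_span_legendreFun hdeg using 2 with t
  simp [mul_div_cancel₀]

end LegendreFun

section Cube

variable {d : ℕ}

lemma isLowerSet_of_downwardClosed {Λ : Finset (Fin d → ℕ)} (hΛ : DownwardClosed Λ) :
    IsLowerSet (Λ : Set (Fin d → ℕ)) :=
  fun ν μ hμν hν ↦ hΛ ν hν μ hμν

lemma uniformCube_eq_pi_uniformInterval (d : ℕ) :
    uniformCube d = Measure.pi fun _ ↦ uniformInterval := rfl

instance (d : ℕ) : IsProbabilityMeasure (uniformCube d) :=
  inferInstanceAs (IsProbabilityMeasure (Measure.pi fun _ ↦ uniformInterval))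

lemma ae_mem_cube (d : ℕ) : ∀ᵐ y ∂uniformCube d, y ∈ cube d := by
  simp only [uniformCube_eq_pi_uniformInterval, cube, Set.mem_univ_pi, ae_all_iff]
  exact fun i ↦ Measure.tendsto_eval_ae_ae ae_mem_Icc_uniformInterval

lemma isCompact_cube (d : ℕ) : IsCompact (cube d) :=
  isCompact_univ_pi fun _ ↦ isCompact_Icc

lemma integrable_uniformCube {E : Type*} [NormedAddCommGroup E] {f : (Fin d → ℝ) → E}
    (hf : Continuous f) : Integrable f (uniformCube d) := by
  obtain ⟨C, hC⟩ := (isCompact_cube d).exists_bound_of_continuousOn hf.continuousOn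
  exact .of_bound hf.aestronglyMeasurable C ((ae_mem_cube d).mono hC)

lemma sum_tensorFamily_legendreFun_sq_le {Λ : Finset (Fin d → ℕ)}
    (hΛ : IsLowerSet (Λ : Set (Fin d → ℕ))) {y : Fin d → ℝ} (hy : y ∈ cube d) :
    ∑ ν ∈ Λ, tensorFamily legendreFun ν y ^ 2 ≤ (Λ.card : ℝ) ^ 2 :=
  calc ∑ ν ∈ Λ, tensorFamily legendreFun ν y ^ 2
      ≤ ∑ ν ∈ Λ, ∏ i, (2 * (ν i : ℝ) + 1) := by
        refine Finset.sum_le_sum fun ν _ ↦ ?_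
        rw [tensorFamily, ← Finset.prod_pow]
        exact Finset.prod_le_prod (fun i _ ↦ sq_nonneg _)
          fun i _ ↦ legendreFun_sq_le (ν i) (hy i trivial)
    _ ≤ (Λ.card : ℝ) ^ 2 := by exact_mod_cast sum_prod_two_mul_add_one_le_card_sq hΛ

lemma monomial_mem_span_tensorFamily_legendreFun (ν : Fin d → ℕ) :
    (fun y : Fin d → ℝ ↦ ∏ i, y i ^ ν i) ∈
      Submodule.span ℝ (tensorFamily legendreFun '' Set.Iic ν) := by
  have hmem := prod_mem_span_tensorFamily (φ := legendreFun) (f := fun i t ↦ t ^ ν i)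
    (s := fun i ↦ Finset.Iic (ν i)) fun i ↦ by
      simpa only [Finset.coe_Iic] using pow_mem_span_legendreFun (ν i)
  rwa [Fintype.coe_piFinset, funext fun i ↦ Finset.coe_Iic (ν i), Set.pi_univ_Iic] at hmem

lemma polyEval_mem_span_tensorFamily_legendreFun {Λ : Finset (Fin d → ℕ)}
    (hΛ : IsLowerSet (Λ : Set (Fin d → ℕ))) (c : (Fin d → ℕ) → ℝ) :
    polyEval Λ c ∈ Submodule.span ℝ (tensorFamily legendreFun '' Λ) := by
  have heq : polyEval Λ c = ∑ ν ∈ Λ, c ν • fun y : Fin d → ℝ ↦ ∏ i, y i ^ ν i := by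
    ext y
    simp [polyEval, mul_comm]
  rw [heq]
  refine Submodule.sum_mem _ fun ν hν ↦ Submodule.smul_mem _ _ ?_
  exact Submodule.span_mono (Set.image_mono (hΛ.Iic_subset hν))
    (monomial_mem_span_tensorFamily_legendreFun ν)

@[fun_prop]
lemma continuous_polyEval {V : Type*} [AddCommGroup V] [Module ℝ V] [TopologicalSpace V]
    [ContinuousAdd V] [ContinuousSMul ℝ V] (Λ : Finset (Fin d → ℕ)) (a : (Fin d → ℕ) → V) :
    Continuous (polyEval Λ a) := by
  unfold polyEval
  fun_prop

lemma polyEval_comp {V W F : Type*} [AddCommGroup V] [Module ℝ V] [AddCommGroup W] [Module ℝ W]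
    [FunLike F V W] [LinearMapClass F ℝ V W] (g : F) (Λ : Finset (Fin d → ℕ))
    (a : (Fin d → ℕ) → V) (y : Fin d → ℝ) :
    polyEval Λ (g ∘ a) y = g (polyEval Λ a y) := by
  simp [polyEval]

lemma polyEval_sq_le_card_sq_mul_integral {Λ : Finset (Fin d → ℕ)}
    (hΛ : IsLowerSet (Λ : Set (Fin d → ℕ))) (c : (Fin d → ℕ) → ℝ) {y : Fin d → ℝ}
    (hy : y ∈ cube d) :
    polyEval Λ c y ^ 2 ≤ (Λ.card : ℝ) ^ 2 * ∫ x, polyEval Λ c x ^ 2 ∂uniformCube d := by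
  have horth : IsL2Orthonormal (uniformCube d) (tensorFamily legendreFun) :=
    isL2Orthonormal_legendreFun.tensor
  refine (horth.sq_le_of_mem_span
    (polyEval_mem_span_tensorFamily_legendreFun hΛ c) y).trans ?_
  exact mul_le_mul_of_nonneg_right (sum_tensorFamily_legendreFun_sq_le hΛ hy)
    (integral_nonneg fun _ ↦ sq_nonneg _)

variable {V : Type*} [NormedAddCommGroup V] [NormedSpace ℝ V]

lemma norm_polyEval_sq_le_card_sq_mul_integral {Λ : Finset (Fin d → ℕ)}
    (hΛ : IsLowerSet (Λ : Set (Fin d → ℕ))) (a : (Fin d → ℕ) → V) {y : Fin d → ℝ}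
    (hy : y ∈ cube d) :
    ‖polyEval Λ a y‖ ^ 2 ≤
      (Λ.card : ℝ) ^ 2 * ∫ x, ‖polyEval Λ a x‖ ^ 2 ∂uniformCube d := by
  obtain ⟨g, hg, hgy⟩ := exists_dual_vector'' ℝ (polyEval Λ a y)
  have hle (x : Fin d → ℝ) : polyEval Λ (g ∘ a) x ^ 2 ≤ ‖polyEval Λ a x‖ ^ 2 := by
    rw [polyEval_comp, ← sq_abs, ← Real.norm_eq_abs]
    exact pow_le_pow_left₀ (norm_nonneg _) (by simpa using g.le_of_opNorm_le hg _) 2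
  calc ‖polyEval Λ a y‖ ^ 2
      = polyEval Λ (g ∘ a) y ^ 2 := by rw [polyEval_comp, hgy]; rfl
    _ ≤ (Λ.card : ℝ) ^ 2 * ∫ x, polyEval Λ (g ∘ a) x ^ 2 ∂uniformCube d :=
        polyEval_sq_le_card_sq_mul_integral hΛ _ hy
    _ ≤ (Λ.card : ℝ) ^ 2 * ∫ x, ‖polyEval Λ a x‖ ^ 2 ∂uniformCube d := by
        refine mul_le_mul_of_nonneg_left ?_ (sq_nonneg _)
        exact integral_mono (integrable_uniformCube (by fun_prop))
          (integrable_uniformCube (by fun_prop)) hle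

lemma norm_polyEval_le_iSup (Λ : Finset (Fin d → ℕ)) (a : (Fin d → ℕ) → V) {y : Fin d → ℝ}
    (hy : y ∈ cube d) : ‖polyEval Λ a y‖ ≤ ⨆ x ∈ cube d, ‖polyEval Λ a x‖ := by
  obtain ⟨C, hC⟩ :=
    (isCompact_cube d).exists_bound_of_continuousOn (continuous_polyEval Λ a).continuousOn
  refine le_ciSup₂ (f := fun x (_ : x ∈ cube d) ↦ ‖polyEval Λ a x‖) ⟨C, ?_⟩ y hy
  rintro _ ⟨_, ⟨x, rfl⟩, hx, rfl⟩
  exact hC x hx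

lemma iSup_norm_polyEval_sq_le {Λ : Finset (Fin d → ℕ)}
    (hΛ : IsLowerSet (Λ : Set (Fin d → ℕ))) (a : (Fin d → ℕ) → V) :
    (⨆ y ∈ cube d, ‖polyEval Λ a y‖) ^ 2 ≤
      (Λ.card : ℝ) ^ 2 * ∫ x, ‖polyEval Λ a x‖ ^ 2 ∂uniformCube d := by
  have hsup_nonneg : 0 ≤ ⨆ y ∈ cube d, ‖polyEval Λ a y‖ :=
    Real.iSup_nonneg fun _ ↦ Real.iSup_nonneg fun _ ↦ norm_nonneg _
  refine (Real.le_sqrt hsup_nonneg (by positivity)).1 ?_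
  refine Real.iSup_le (fun y ↦ Real.iSup_le (fun hy ↦ ?_) (Real.sqrt_nonneg _)) (Real.sqrt_nonneg _)
  exact Real.le_sqrt_of_sq_le (norm_polyEval_sq_le_card_sq_mul_integral hΛ a hy)

end Cube

section LowerTail

variable {α : Type*} [MeasurableSpace α] {μ : Measure α} [IsProbabilityMeasure μ] {f : α → ℝ}
  {M : ℝ}

lemma integral_sq_le_sq_add_sq_mul_measureReal (hf : Measurable f) (hf_nonneg : ∀ x, 0 ≤ f x)
    (hfM : ∀ᵐ x ∂μ, f x ≤ M) (t : ℝ) :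
    ∫ x, f x ^ 2 ∂μ ≤ t ^ 2 + M ^ 2 * μ.real {x | t ≤ f x} := by
  have hmeas : MeasurableSet {x | t ≤ f x} := measurableSet_le measurable_const hf
  have hind : Integrable ({x | t ≤ f x}.indicator fun _ ↦ M ^ 2) μ :=
    (integrable_const _).indicator hmeas
  calc ∫ x, f x ^ 2 ∂μ
      ≤ ∫ x, (t ^ 2 + {x | t ≤ f x}.indicator (fun _ ↦ M ^ 2) x) ∂μ := by
        refine integral_mono_of_nonneg (.of_forall fun x ↦ sq_nonneg _)
          ((integrable_const _).add hind) (hfM.mono fun x hx ↦ ?_)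
        by_cases hxt : t ≤ f x
        · simpa [hxt] using (pow_le_pow_left₀ (hf_nonneg x) hx 2).trans
            (le_add_of_nonneg_left (sq_nonneg t))
        · simpa [hxt] using pow_le_pow_left₀ (hf_nonneg x) (not_le.1 hxt).le 2
    _ = t ^ 2 + M ^ 2 * μ.real {x | t ≤ f x} := by
        rw [integral_add (integrable_const _) hind, integral_indicator_const _ hmeas]
        simp [mul_comm]

lemma one_sub_sq_div_sq_le_measureReal (hf : Measurable f) (hf_nonneg : ∀ x, 0 ≤ f x)
    (hfM : ∀ᵐ x ∂μ, f x ≤ M) (hM : 0 < M) {K : ℝ} (hK : M ^ 2 ≤ K ^ 2 * ∫ x, f x ^ 2 ∂μ)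
    (θ : ℝ) : (1 - θ ^ 2) / K ^ 2 ≤ μ.real {x | θ * M / K ≤ f x} := by
  have hK0 : K ≠ 0 := by
    rintro rfl
    rw [zero_pow two_ne_zero, zero_mul] at hK
    exact hK.not_gt (by positivity)
  have hlow := integral_sq_le_sq_add_sq_mul_measureReal hf hf_nonneg hfM (θ * M / K)
  have hscaled : M ^ 2 * 1 ≤ M ^ 2 * (θ ^ 2 + K ^ 2 * μ.real {x | θ * M / K ≤ f x}) :=
    calc M ^ 2 * 1 ≤ K ^ 2 * ∫ x, f x ^ 2 ∂μ := by rwa [mul_one]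
      _ ≤ K ^ 2 * ((θ * M / K) ^ 2 + M ^ 2 * μ.real {x | θ * M / K ≤ f x}) := by gcongr
      _ = M ^ 2 * (θ ^ 2 + K ^ 2 * μ.real {x | θ * M / K ≤ f x}) := by field_simp
  rw [div_le_iff₀' (by positivity)]
  linarith [le_of_mul_le_mul_left hscaled (by positivity)]

end LowerTail

theorem statement9_general {d : ℕ} {V : Type*} [NormedAddCommGroup V] [NormedSpace ℝ V]
    (Λ : Finset (Fin d → ℕ)) (hΛ : DownwardClosed Λ) (a : (Fin d → ℕ) → V)
    (M1 : ℝ) (hM1 : M1 = ⨆ y ∈ cube d, ‖polyEval Λ a y‖) (hpos : 0 < M1) (θ : ℝ) :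
    ENNReal.ofReal ((1 - θ ^ 2) / (Λ.card : ℝ) ^ 2) ≤
      uniformCube d {y ∈ cube d | θ * M1 / Λ.card ≤ ‖polyEval Λ a y‖} := by
  have hsup : ∀ᵐ y ∂uniformCube d, ‖polyEval Λ a y‖ ≤ M1 :=
    (ae_mem_cube d).mono fun y hy ↦ hM1 ▸ norm_polyEval_le_iSup Λ a hy
  have hnikolskii : M1 ^ 2 ≤
      (Λ.card : ℝ) ^ 2 * ∫ y, ‖polyEval Λ a y‖ ^ 2 ∂uniformCube d :=
    hM1 ▸ iSup_norm_polyEval_sq_le (isLowerSet_of_downwardClosed hΛ) a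
  have htail := one_sub_sq_div_sq_le_measureReal (continuous_polyEval Λ a).norm.measurable
    (fun _ ↦ norm_nonneg _) hsup hpos hnikolskii θ
  refine (ENNReal.ofReal_le_of_le_toReal htail).trans (measure_mono_ae ?_)
  exact (ae_mem_cube d).mono fun y hy hθ ↦ ⟨hy, hθ⟩

theorem statement9 {d : ℕ} (hd : 0 < d) {V : Type*} [NormedAddCommGroup V]
    [InnerProductSpace ℝ V]
    (Λ : Finset (Fin d → ℕ)) (hΛ : DownwardClosed Λ)
    (m : ℕ) (hm : 1 ≤ m) (hcard : Λ.card = m) (a : (Fin d → ℕ) → V)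
    (M1 : ℝ) (hM1 : M1 = ⨆ y ∈ cube d, ‖polyEval Λ a y‖) (hpos : 0 < M1) :
    ENNReal.ofReal (3 / (4 * (m : ℝ) ^ 2)) ≤
      uniformCube d {y ∈ cube d | M1 / (2 * m) ≤ ‖polyEval Λ a y‖} := by
  subst hcard
  have hmeasure : (3 : ℝ) / (4 * (Λ.card : ℝ) ^ 2) = (1 - (1 / 2) ^ 2) / (Λ.card : ℝ) ^ 2 := by
    ring
  have hthreshold : M1 / (2 * Λ.card) = 1 / 2 * M1 / Λ.card := by ring
  simpa only [hmeasure, hthreshold] using statement9_general Λ hΛ a M1 hM1 hpos (1 / 2)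
end
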